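/- With the apparatus fixed and p sufficiently large in terms of k, suppose that Λ ≥ 0. Let a and b be integers with 0 ≤ a < b ≤ (32tθ)^{−1} and b ≥ ta, and put g = b − ta. Suppose there are real numbers ψ, c and γ with 0 ≤ c ≤ (2δ)^{−1}θ, γ ≥ −rb and ψ ≥ 0, and a constant C₁ > 0, such that X^Λ·M^{Λψ} ≤ C₁·X^{cδ}·M^{−γ}·⟦K_{a,b}(X)⟧. Then, provided X is sufficiently large in terms of s, k, r, t, N and C₁, there exist an integer h with 0 ≤ h ≤ 15(t−1)b and a constant C₂ depending at most on s, k, r, t, N, C₁, such that X^Λ·M^{Λψ′} ≤ C₂·X^{c′δ}·M^{−γ′}·⟦K_{b,tb+h}(X)⟧, where ψ′ = tψ + (t−1)b, c′ = t(c+1) and γ′ = tγ + (4/3)sh − sg. -/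

import Mathlib

open Filter MeasureTheory Finset

attribute [local instance] Classical.propDecidable

noncomputable section

/-- Number of integral solutions of the Vinogradov system of degree k
in 2s variables from [1,X]. -/
def Jcount (s k : ℕ) (X : ℝ) : ℕ :=
  Set.ncard {xy : (Fin s → ℤ) × (Fin s → ℤ) |
    (∀ i, 1 ≤ xy.1 i ∧ (xy.1 i : ℝ) ≤ X) ∧
    (∀ i, 1 ≤ xy.2 i ∧ (xy.2 i : ℝ) ≤ X) ∧
    ∀ j ∈ Finset.Icc 1 k, ∑ i, ((xy.1 i) ^ j - (xy.2 i) ^ j) = 0}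

/-- e(z) = exp(2πiz). -/
def ec (z : ℝ) : ℂ := Complex.exp (2 * Real.pi * Complex.I * z)

/-- The unit box [0,1)^k. -/
def box (k : ℕ) : Set (Fin k → ℝ) := Set.univ.pi fun _ => Set.Ico (0:ℝ) 1

/-- The exponential sum f_c(α;ξ), over 1 ≤ x ≤ X with x ≡ ξ (mod p^c). -/
def fexp (k p : ℕ) (X : ℝ) (c : ℕ) (ξ : ℤ) (α : Fin k → ℝ) : ℂ :=
  ∑ x ∈ (Finset.Icc (1:ℤ) ⌊X⌋).filter (fun x => Int.ModEq ((p:ℤ)^c) x ξ),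
    ec (∑ j : Fin k, α j * (x:ℝ)^((j:ℕ)+1))

/-- The set Ξ_c^r(ξ): r-tuples in [1,p^{c+1}], congruent to ξ mod p^c,
pairwise distinct mod p^{c+1}. -/
def XiSet (p r c : ℕ) (ξ : ℤ) : Set (Fin r → ℤ) :=
  {v | (∀ i, 1 ≤ v i ∧ v i ≤ (p:ℤ)^(c+1)) ∧
       (∀ i, Int.ModEq ((p:ℤ)^c) (v i) ξ) ∧
       Function.Injective fun i => ((v i : ZMod (p^(c+1))))}

/-- The conditioned exponential sum F_c(α;ξ). -/
def Fexp (k p r : ℕ) (X : ℝ) (c : ℕ) (ξ : ℤ) (α : Fin k → ℝ) : ℂ :=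
  ∑ᶠ v ∈ XiSet p r c ξ, ∏ i, fexp k p X (c+1) (v i) α

/-- The mean value I_{a,b}(X;ξ,η). -/
def Iab (k p r s : ℕ) (X : ℝ) (a b : ℕ) (ξ η : ℤ) : ℝ :=
  ∫ α in box k, ‖Fexp k p r X a ξ α‖^2 * ‖fexp k p X b η α‖^(2*s)

/-- The mean value K_{a,b}(X;ξ,η). -/
def Kab (k p r t : ℕ) (X : ℝ) (a b : ℕ) (ξ η : ℤ) : ℝ :=
  ∫ α in box k, ‖Fexp k p r X a ξ α‖^2 * ‖Fexp k p r X b η α‖^(2*t)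

/-- I_{a,b}(X): the maximum of I_{a,b}(X;ξ,η) over admissible ξ, η. -/
def Imax (k p r s : ℕ) (X : ℝ) (a b : ℕ) : ℝ :=
  sSup {v : ℝ | ∃ ξ η : ℤ, 1 ≤ ξ ∧ ξ ≤ (p:ℤ)^a ∧ 1 ≤ η ∧ η ≤ (p:ℤ)^b ∧
    ¬ Int.ModEq (p:ℤ) η ξ ∧ v = Iab k p r s X a b ξ η}

/-- The set Ξ(η) of members of Ξ_0^r(0) avoiding the class of η mod p. -/
def XiTilde (p r : ℕ) (η : ℤ) : Set (Fin r → ℤ) :=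
  {v | v ∈ XiSet p r 0 0 ∧ ∀ i, ¬ Int.ModEq (p:ℤ) (v i) η}

/-- The pre-conditioned sum F(α;η). -/
def Ftilde (k p r : ℕ) (X : ℝ) (η : ℤ) (α : Fin k → ℝ) : ℂ :=
  ∑ᶠ v ∈ XiTilde p r η, ∏ i, fexp k p X 1 (v i) α

/-- The mean value K̃_c(X;η). -/
def Ktilde (k p r t : ℕ) (X : ℝ) (c : ℕ) (η : ℤ) : ℝ :=
  ∫ α in box k, ‖Ftilde k p r X η α‖^2 * ‖Fexp k p r X c η α‖^(2*t)

/-- K_{a,b}(X): for a ≥ 1 the maximum of K_{a,b}(X;ξ,η) over admissible ξ, η;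
for a = 0 the pre-congruencing quantity K_{0,b}(X) = max_η K̃_b(X;η). -/
def Kmax (k p r t : ℕ) (X : ℝ) (a b : ℕ) : ℝ :=
  if a = 0 then sSup {v : ℝ | ∃ η : ℤ, 1 ≤ η ∧ η ≤ (p:ℤ)^b ∧ v = Ktilde k p r t X b η}
  else sSup {v : ℝ | ∃ ξ η : ℤ, 1 ≤ ξ ∧ ξ ≤ (p:ℤ)^a ∧ 1 ≤ η ∧ η ≤ (p:ℤ)^b ∧
    ¬ Int.ModEq (p:ℤ) η ξ ∧ v = Kab k p r t X a b ξ η}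

/-- λ = limsup_{Y→∞} log J_{sr,k}(Y)/log Y. -/
def lamExp (k sr : ℕ) : ℝ :=
  Filter.limsup (fun Y : ℝ => Real.log ((Jcount sr k Y : ℝ)) / Real.log Y) Filter.atTop

/-- θ = (16t)^{-N-1}. -/
def thetaC (t N : ℕ) : ℝ := (16*(t:ℝ)) ^ (-((N:ℝ)+1))

/-- δ = θ/(1000 N t^N). -/
def deltaC (t N : ℕ) : ℝ := thetaC t N / (1000 * (N:ℝ) * (t:ℝ)^N)

/-- M = X^θ. -/
def Mval (t N : ℕ) (X : ℝ) : ℝ := X ^ thetaC t N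

/-- κ = r(t+1) - (1/2)(t+r-k)(t+r-k-1+(2r-2)/(t-1)). -/
def kappa (k r t : ℕ) : ℝ :=
  (r : ℝ) * ((t : ℝ) + 1) -
    (1/2) * ((t : ℝ) + r - k) * ((t : ℝ) + r - k - 1 + (2*(r:ℝ) - 2)/((t:ℝ) - 1))

/-- Λ = λ - 2(s+r) + κ, with s = rt. -/
def LamC (k r t : ℕ) : ℝ := lamExp k (r*(t+1)) - 2*((r*(t+1) : ℕ) : ℝ) + kappa k r t

/-- The normalised mean value ⟦K_{a,b}(X)⟧ = K_{a,b}(X) (X/M^b)^{-2s} (X/M^a)^{κ-2r}. -/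
def normK (k p r t N : ℕ) (X : ℝ) (a b : ℕ) : ℝ :=
  Kmax k p r t X a b * (X / (Mval t N X)^b) ^ (-(2*((r*t : ℕ):ℝ))) *
    (X / (Mval t N X)^a) ^ (kappa k r t - 2*(r:ℝ))

/-- μ = (1/2)(t+r-k)(t+r-k-1). -/
def muC (k r t : ℕ) : ℝ := (1/2) * ((t:ℝ)+r-k) * ((t:ℝ)+r-k-1)

/-- ν = (1/2)(t+r-k)(k+r-t-1). -/
def nuC (k r t : ℕ) : ℝ := (1/2) * ((t:ℝ)+r-k) * ((k:ℝ)+r-t-1)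

/-! ### Power sums, antiderivatives and Hensel lifting -/

/-- Tuples with equal power sums of degrees `1, …, r` in a field where `1, …, r` are nonzero
have the same sets of entries. -/
lemma exists_eq_of_powerSum_eq {K : Type*} [Field K] {r : ℕ}
    (hK : ∀ j : ℕ, 1 ≤ j → j ≤ r → (j : K) ≠ 0) (v w : Fin r → K)
    (h : ∀ j : ℕ, 1 ≤ j → j ≤ r → ∑ i, v i ^ j = ∑ i, w i ^ j) (i : Fin r) :
    ∃ j, w i = v j := by
  have hes : ∀ j : ℕ, j ≤ r → MvPolynomial.aeval v (MvPolynomial.esymm (Fin r) K j)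
      = MvPolynomial.aeval w (MvPolynomial.esymm (Fin r) K j) := by
    intro j
    induction j using Nat.strong_induction_on with
    | _ j ih =>
      intro hj
      rcases Nat.eq_zero_or_pos j with rfl | hpos
      · simp
      have hv := congrArg (MvPolynomial.aeval v) (MvPolynomial.mul_esymm_eq_sum (Fin r) K j)
      have hw := congrArg (MvPolynomial.aeval w) (MvPolynomial.mul_esymm_eq_sum (Fin r) K j)
      simp only [map_mul, map_natCast, map_sum, map_pow, map_neg, map_one] at hv hw
      refine mul_left_cancel₀ (hK j hpos hj) ?_
      rw [hv, hw]
      congr 1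
      refine Finset.sum_congr rfl fun x hx => ?_
      rw [Finset.mem_filter, Finset.HasAntidiagonal.mem_antidiagonal] at hx
      rw [ih x.1 hx.2 (by omega)]
      congr 1
      simp only [MvPolynomial.psum, map_sum, map_pow, MvPolynomial.aeval_X]
      exact h x.2 (by omega) (by omega)
  have hprod : ((Finset.univ.val.map v).map fun x => Polynomial.X - Polynomial.C x).prod
      = ((Finset.univ.val.map w).map fun x => Polynomial.X - Polynomial.C x).prod := by
    rw [Multiset.prod_X_sub_X_eq_sum_esymm, Multiset.prod_X_sub_X_eq_sum_esymm]
    simp only [Multiset.card_map]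
    refine Finset.sum_congr rfl fun j hj => ?_
    have hj' : j ≤ r := by
      have := Finset.mem_range.1 hj
      simp at this
      omega
    have := hes j hj'
    rw [MvPolynomial.aeval_esymm_eq_multiset_esymm,
      MvPolynomial.aeval_esymm_eq_multiset_esymm] at this
    rw [this]
  have hroots := congrArg Polynomial.roots hprod
  rw [Polynomial.roots_multiset_prod_X_sub_C, Polynomial.roots_multiset_prod_X_sub_C] at hroots
  have hmem : w i ∈ Finset.univ.val.map w := Multiset.mem_map_of_mem w (Finset.mem_univ_val i)
  rw [← hroots, Multiset.mem_map] at hmem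
  obtain ⟨j, -, hj⟩ := hmem
  exact ⟨j, hj.symm⟩

/-- `k!` times the antiderivative (vanishing at `0`) of an integral polynomial
of degree less than `k`. -/
def scaledAntideriv (k : ℕ) (f : Polynomial ℤ) : Polynomial ℤ :=
  ∑ n ∈ Finset.range k,
    Polynomial.C (((k.factorial / (n + 1) : ℕ) : ℤ) * f.coeff n) * Polynomial.X ^ (n + 1)

lemma derivative_scaledAntideriv (k : ℕ) (f : Polynomial ℤ) (hf : f.natDegree < k) :
    (scaledAntideriv k f).derivative = Polynomial.C (k.factorial : ℤ) * f := by
  unfold scaledAntideriv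
  rw [Polynomial.derivative_sum]
  conv_rhs => rw [f.as_sum_range_C_mul_X_pow' hf, Finset.mul_sum]
  refine Finset.sum_congr rfl fun n hn => ?_
  have hdvd : (n + 1) ∣ k.factorial :=
    Nat.dvd_factorial (Nat.succ_pos n) (Finset.mem_range.1 hn)
  have hfac : (k.factorial : ℤ) = ((k.factorial / (n + 1) : ℕ) : ℤ) * ((n : ℤ) + 1) := by
    exact_mod_cast (Nat.div_mul_cancel hdvd).symm
  rw [Polynomial.derivative_C_mul_X_pow, hfac]
  simp only [Nat.add_sub_cancel, map_mul, map_add, map_one, Nat.cast_add, Nat.cast_one]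
  ring

lemma scaledAntideriv_eval_zero (k : ℕ) (f : Polynomial ℤ) :
    (scaledAntideriv k f).eval 0 = 0 := by
  simp [scaledAntideriv, Polynomial.eval_finsetSum]

lemma dvd_scaledAntideriv_sub_eval (k : ℕ) {p : ℤ} {f g : Polynomial ℤ}
    (h : ∀ n, p ∣ f.coeff n - g.coeff n) (x : ℤ) :
    p ∣ (scaledAntideriv k f).eval x - (scaledAntideriv k g).eval x := by
  simp only [scaledAntideriv, Polynomial.eval_finsetSum, ← Finset.sum_sub_distrib,
    Polynomial.eval_mul, Polynomial.eval_C, Polynomial.eval_pow, Polynomial.eval_X]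
  refine Finset.dvd_sum fun n _ => ?_
  rw [← sub_mul, ← mul_sub]
  exact Dvd.dvd.mul_right (Dvd.dvd.mul_left (h n) _) _

lemma coeff_scaledAntideriv_succ (k : ℕ) (f : Polynomial ℤ) (n : ℕ) :
    (scaledAntideriv k f).coeff (n + 1) =
      if n < k then ((k.factorial / (n + 1) : ℕ) : ℤ) * f.coeff n else 0 := by
  unfold scaledAntideriv
  simp only [Polynomial.finsetSum_coeff, Polynomial.coeff_C_mul, Polynomial.coeff_X_pow,
    add_left_inj, mul_ite, mul_one, mul_zero, Finset.sum_ite_eq, Finset.mem_range]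

lemma natDegree_scaledAntideriv_le (k : ℕ) (f : Polynomial ℤ) :
    (scaledAntideriv k f).natDegree ≤ k := by
  refine Polynomial.natDegree_sum_le_of_forall_le _ _ fun n hn => ?_
  exact (Polynomial.natDegree_C_mul_X_pow_le _ _).trans (Finset.mem_range.1 hn)

/-- The polynomial `k! ∫₀ʷ (ω + q v)^(l-1) v^(k-l) dv`. -/
def liftPoly (k l : ℕ) (ω q : ℤ) : Polynomial ℤ :=
  scaledAntideriv k ((Polynomial.C ω + Polynomial.C q * Polynomial.X) ^ (l - 1)
    * Polynomial.X ^ (k - l))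

lemma natDegree_linear_pow_mul_lt {k l : ℕ} (hl : 1 ≤ l) (hlk : l ≤ k) (A B : Polynomial ℤ)
    (hA : A.natDegree ≤ 1) (hB : B.natDegree ≤ 1) :
    (A ^ (l - 1) * B ^ (k - l)).natDegree < k := by
  have h1 : (A ^ (l - 1)).natDegree ≤ (l - 1) * 1 := Polynomial.natDegree_pow_le_of_le _ hA
  have h2 : (B ^ (k - l)).natDegree ≤ (k - l) * 1 := Polynomial.natDegree_pow_le_of_le _ hB
  have := Polynomial.natDegree_mul_le (p := A ^ (l - 1)) (q := B ^ (k - l))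
  omega

lemma derivative_liftPoly {k l : ℕ} (hl : 1 ≤ l) (hlk : l ≤ k) (ω q w : ℤ) :
    (liftPoly k l ω q).derivative.eval w
      = (k.factorial : ℤ) * ((ω + q * w) ^ (l - 1) * w ^ (k - l)) := by
  unfold liftPoly
  rw [derivative_scaledAntideriv]
  · simp
  · refine natDegree_linear_pow_mul_lt hl hlk _ _ ?_ (by simp)
    compute_degree

/-- The lifting polynomial, after rescaling, is a combination of the monomials
`(ω + q w)^j` with `l ≤ j ≤ k`. -/
lemma exists_liftPoly_eq_sum {k l : ℕ} (hl : 1 ≤ l) (hlk : l ≤ k) (ω q : ℤ) :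
    ∃ (d : ℤ) (c : ℕ → ℤ), ∀ w : ℤ, q ^ (k - l + 1) * (liftPoly k l ω q).eval w
      = d + ∑ j ∈ Finset.Icc l k, c j * (ω + q * w) ^ j := by
  set P : Polynomial ℤ := scaledAntideriv k
    (Polynomial.X ^ (l - 1) * (Polynomial.X - Polynomial.C ω) ^ (k - l)) with hP
  set L : Polynomial ℤ := Polynomial.C ω + Polynomial.C q * Polynomial.X with hL
  have hdeg : (Polynomial.X ^ (l - 1) * (Polynomial.X - Polynomial.C ω) ^ (k - l)
      : Polynomial ℤ).natDegree < k :=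
    natDegree_linear_pow_mul_lt hl hlk _ _ (by simp) (Polynomial.natDegree_X_sub_C_le ω)
  have hdegL : (L ^ (l - 1) * Polynomial.X ^ (k - l)).natDegree < k := by
    refine natDegree_linear_pow_mul_lt hl hlk _ _ ?_ (by simp)
    rw [hL]; compute_degree
  have hder : (Polynomial.C (q ^ (k - l + 1)) * liftPoly k l ω q - P.comp L).derivative = 0 := by
    rw [Polynomial.derivative_sub, Polynomial.derivative_C_mul, Polynomial.derivative_comp,
      liftPoly, derivative_scaledAntideriv k _ hdegL, hP, derivative_scaledAntideriv k _ hdeg]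
    have h1 : L.derivative = Polynomial.C q := by simp [hL]
    rw [h1]
    simp only [Polynomial.mul_comp, Polynomial.pow_comp, Polynomial.sub_comp,
      Polynomial.X_comp, Polynomial.C_comp]
    have h2 : L - Polynomial.C ω = Polynomial.C q * Polynomial.X := by rw [hL]; ring
    rw [h2, map_pow]
    ring
  obtain ⟨d, hd⟩ := Polynomial.natDegree_eq_zero.1
    (Polynomial.derivative_eq_zero.1 hder)
  refine ⟨d, fun j => P.coeff j, fun w => ?_⟩
  have hev := congrArg (Polynomial.eval w) hd
  simp only [Polynomial.eval_C, Polynomial.eval_sub, Polynomial.eval_mul,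
    Polynomial.eval_comp] at hev
  have hLw : L.eval w = ω + q * w := by simp [hL]
  rw [hLw] at hev
  have hPe : P.eval (ω + q * w) = ∑ j ∈ Finset.Icc l k, P.coeff j * (ω + q * w) ^ j := by
    rw [Polynomial.eval_eq_sum_range'
      (Nat.lt_succ_of_le (natDegree_scaledAntideriv_le k _ : P.natDegree ≤ k))]
    symm
    refine Finset.sum_subset (fun j hj => ?_) (fun j _ hj => ?_)
    · simp only [Finset.mem_Icc, Finset.mem_range] at hj ⊢; omega
    · have hjl : j < l := by
        rename_i hjr
        simp only [Finset.mem_Icc, Finset.mem_range] at hj hjr; omega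
      have : P.coeff j = 0 := by
        rcases j with _ | n
        · simp [hP, Polynomial.coeff_zero_eq_eval_zero, scaledAntideriv_eval_zero]
        · rw [hP, coeff_scaledAntideriv_succ]
          split_ifs
          · rw [Polynomial.coeff_X_pow_mul', if_neg (by omega), mul_zero]
          · rfl
      rw [this, zero_mul]
  rw [← hPe]
  linarith

lemma liftPoly_eval_congr {k l : ℕ} (hl : 1 ≤ l) (hlk : l ≤ k) {p ω q : ℤ} (hpq : p ∣ q) (w : ℤ) :
    p ∣ (liftPoly k l ω q).eval w
      - ((k.factorial / (k - l + 1) : ℕ) : ℤ) * ω ^ (l - 1) * w ^ (k - l + 1) := by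
  have hmono : (scaledAntideriv k
      (Polynomial.C (ω ^ (l - 1)) * Polynomial.X ^ (k - l))).eval w
      = ((k.factorial / (k - l + 1) : ℕ) : ℤ) * ω ^ (l - 1) * w ^ (k - l + 1) := by
    unfold scaledAntideriv
    rw [Polynomial.eval_finsetSum, Finset.sum_eq_single (k - l)]
    · simp only [Polynomial.coeff_C_mul, Polynomial.coeff_X_pow, if_true, mul_one,
        Polynomial.eval_mul, Polynomial.eval_C, Polynomial.eval_pow, Polynomial.eval_X]
    · intro n _ hn
      simp only [Polynomial.coeff_C_mul, Polynomial.coeff_X_pow, if_neg hn, mul_zero, map_zero,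
        zero_mul, Polynomial.eval_zero]
    · intro h
      exact absurd (Finset.mem_range.2 (by omega)) h
  rw [← hmono]
  refine dvd_scaledAntideriv_sub_eval k (fun n => ?_) w
  have hdvd : Polynomial.C p ∣ (Polynomial.C ω + Polynomial.C q * Polynomial.X) ^ (l - 1)
      * Polynomial.X ^ (k - l) - Polynomial.C (ω ^ (l - 1)) * Polynomial.X ^ (k - l) := by
    rw [map_pow, ← sub_mul]
    refine Dvd.dvd.mul_right (dvd_trans ?_ (sub_dvd_pow_sub_pow _ _ _)) _
    rw [add_sub_cancel_left]
    exact Dvd.dvd.mul_right (map_dvd Polynomial.C hpq) _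
  have := (Polynomial.C_dvd_iff_dvd_coeff _ _).1 hdvd n
  rwa [Polynomial.coeff_sub] at this

lemma eq_zero_of_projVandermonde {K : Type*} [Field K] {r : ℕ} (n : ℕ) (y w d : Fin r → K)
    (hy : ∀ i, y i ≠ 0) (hyw : ∀ i j, i ≠ j → y j * w i - y i * w j ≠ 0)
    (h : ∀ m : Fin r, ∑ i, y i ^ (n + m) * w i ^ (r - 1 - m) * d i = 0) : d = 0 := by
  have hdet : (Matrix.projVandermonde y w).det ≠ 0 := by
    rw [Matrix.det_projVandermonde]
    refine Finset.prod_ne_zero_iff.2 fun i _ => Finset.prod_ne_zero_iff.2 fun j hj => ?_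
    exact hyw i j (ne_of_lt (Finset.mem_Ioi.1 hj))
  have hzero : (fun i => y i ^ n * d i) = 0 := by
    refine Matrix.eq_zero_of_vecMul_eq_zero hdet ?_
    funext m
    rw [Pi.zero_apply, ← h m]
    simp only [Matrix.vecMul, dotProduct, Matrix.projVandermonde, Matrix.rectVandermonde,
      Matrix.of_apply, Fin.rev]
    refine Finset.sum_congr rfl fun i _ => ?_
    have : r - (↑m + 1) = r - 1 - (m : ℕ) := by omega
    rw [this]
    ring
  funext i
  have := congrFun hzero i
  simp only [Pi.zero_apply] at this ⊢
  exact (mul_eq_zero.1 this).resolve_left (pow_ne_zero _ (hy i))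

section Hensel

variable {p k r : ℕ} {ω q : ℤ} {w w' : Fin r → ℤ}

lemma liftPoly_hensel_succ (hp : p.Prime) (hrk : r ≤ k) (hkp : k < p)
    (hω : ¬ (p : ℤ) ∣ ω) (hy : ∀ i, ¬ (p : ℤ) ∣ ω + q * w i)
    (hw : ∀ i j, i ≠ j → ¬ (p : ℤ) ∣ w i - w j) {m : ℕ} (hm : 1 ≤ m)
    (hww : ∀ i, (p : ℤ) ^ m ∣ w' i - w i)
    (hQ : ∀ l ∈ Finset.Icc (k - r + 1) k, (p : ℤ) ^ (m + 1) ∣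
      ∑ i, (liftPoly k l ω q).eval (w' i) - ∑ i, (liftPoly k l ω q).eval (w i)) (i : Fin r) :
    (p : ℤ) ^ (m + 1) ∣ w' i - w i := by
  have : Fact p.Prime := ⟨hp⟩
  have hp0 : ((p : ℤ) ^ m) ≠ 0 := pow_ne_zero _ (by exact_mod_cast hp.ne_zero)
  choose d hd using hww
  have hw' : ∀ i, w' i = w i + (p : ℤ) ^ m * d i := fun i => by rw [← hd]; ring
  have hlin : ∀ l ∈ Finset.Icc (k - r + 1) k,
      (p : ℤ) ∣ ∑ i, (ω + q * w i) ^ (l - 1) * w i ^ (k - l) * d i := by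
    intro l hl
    have hl' := Finset.mem_Icc.1 hl
    have hex : ∀ i, ∃ c : ℤ, (liftPoly k l ω q).eval (w' i) - (liftPoly k l ω q).eval (w i)
        = (p : ℤ) ^ m * ((k.factorial : ℤ) *
          ((ω + q * w i) ^ (l - 1) * w i ^ (k - l) * d i) + (p : ℤ) * c) := by
      intro i
      obtain ⟨c, hc⟩ := Polynomial.binomExpansion (liftPoly k l ω q) (w i) ((p : ℤ) ^ m * d i)
      refine ⟨c * (p : ℤ) ^ (m - 1) * d i ^ 2, ?_⟩
      rw [hw', hc, derivative_liftPoly (by omega) hl'.2]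
      have : (p : ℤ) ^ m = p * (p : ℤ) ^ (m - 1) := by
        rw [← pow_succ']; congr 1; omega
      rw [show ((p : ℤ) ^ m * d i) ^ 2 = (p : ℤ) ^ m * (p * (p : ℤ) ^ (m - 1)) * d i ^ 2 by
        rw [← this]; ring]
      ring
    choose c hc using hex
    have h1 := hQ l hl
    rw [← Finset.sum_sub_distrib, Finset.sum_congr rfl fun i _ => hc i, ← Finset.mul_sum,
      pow_succ] at h1
    have h2 := Int.dvd_of_mul_dvd_mul_left hp0 h1
    rw [Finset.sum_add_distrib, ← Finset.mul_sum, ← Finset.mul_sum] at h2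
    have h3 := (Int.dvd_add_left (Dvd.intro _ rfl)).1 h2
    refine ((Nat.prime_iff_prime_int.1 hp).dvd_or_dvd h3).resolve_left fun hbad => ?_
    have := (hp.dvd_factorial).1 (Int.natCast_dvd_natCast.1 hbad)
    omega
  have hzero : (fun i => ((d i : ℤ) : ZMod p)) = 0 := by
    refine eq_zero_of_projVandermonde (k - r) (fun i => ((ω + q * w i : ℤ) : ZMod p))
      (fun i => ((w i : ℤ) : ZMod p)) _ ?_ ?_ ?_
    · intro i h0
      exact hy i ((ZMod.intCast_zmod_eq_zero_iff_dvd _ _).1 h0)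
    · intro i j hij h0
      have h1 : (((ω * (w i - w j) : ℤ)) : ZMod p) = 0 := by
        rw [← h0]; push_cast; ring
      rw [ZMod.intCast_zmod_eq_zero_iff_dvd] at h1
      exact ((Nat.prime_iff_prime_int.1 hp).dvd_or_dvd h1).elim hω (hw i j hij)
    · intro m
      have h1 := hlin (k - r + 1 + m) (Finset.mem_Icc.2 ⟨by omega, by omega⟩)
      rw [← ZMod.intCast_zmod_eq_zero_iff_dvd] at h1
      rw [← h1, Int.cast_sum]
      refine Finset.sum_congr rfl fun i _ => ?_
      have e1 : k - r + 1 + (m : ℕ) - 1 = k - r + m := by omega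
      have e2 : k - (k - r + 1 + (m : ℕ)) = r - 1 - m := by omega
      rw [e1, e2]
      push_cast
      ring
  have hdi : (p : ℤ) ∣ d i := (ZMod.intCast_zmod_eq_zero_iff_dvd _ _).1 (congrFun hzero i)
  rw [hd i, pow_succ]
  exact mul_dvd_mul_left _ hdi

lemma liftPoly_hensel (hp : p.Prime) (hrk : r ≤ k) (hkp : k < p)
    (hω : ¬ (p : ℤ) ∣ ω) (hy : ∀ i, ¬ (p : ℤ) ∣ ω + q * w i)
    (hw : ∀ i j, i ≠ j → ¬ (p : ℤ) ∣ w i - w j) (hww : ∀ i, (p : ℤ) ∣ w' i - w i) {T : ℕ}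
    (hQ : ∀ l ∈ Finset.Icc (k - r + 1) k, (p : ℤ) ^ T ∣
      ∑ i, (liftPoly k l ω q).eval (w' i) - ∑ i, (liftPoly k l ω q).eval (w i)) (i : Fin r) :
    (p : ℤ) ^ T ∣ w' i - w i := by
  suffices H : ∀ m, m + 1 ≤ T → ∀ i, (p : ℤ) ^ (m + 1) ∣ w' i - w i by
    rcases T with _ | m
    · simp
    · exact H m le_rfl i
  intro m
  induction m with
  | zero => intro _ i; simpa using hww i
  | succ m ih =>
    intro hT i
    exact liftPoly_hensel_succ hp hrk hkp hω hy hw (Nat.le_add_left 1 m) (ih (by omega))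
      (fun l hl => (pow_dvd_pow _ hT).trans (hQ l hl)) i

end Hensel

/-! ### The number of solutions of the auxiliary congruences -/

section Congruences

variable {p k r t a b : ℕ} {ξ η : ℤ}

lemma dvd_sum_liftPoly_sub (hp : p.Prime) {l : ℕ} (hl : 1 ≤ l) (hlk : l ≤ k) {z z' w w' : Fin r → ℤ}
    (hz : ∀ i, z i = ξ + (p : ℤ) ^ a * w i) (hz' : ∀ i, z' i = ξ + (p : ℤ) ^ a * w' i)
    (h : ∀ j ∈ Finset.Icc 1 k, (p : ℤ) ^ (j * b) ∣ ∑ i, (z i - η) ^ j - ∑ i, (z' i - η) ^ j) :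
    (p : ℤ) ^ (l * b - (k - l + 1) * a) ∣
      ∑ i, (liftPoly k l (ξ - η) ((p : ℤ) ^ a)).eval (w i)
        - ∑ i, (liftPoly k l (ξ - η) ((p : ℤ) ^ a)).eval (w' i) := by
  rcases le_total (l * b) ((k - l + 1) * a) with hle | hle
  · rw [Nat.sub_eq_zero_of_le hle, pow_zero]
    exact one_dvd _
  obtain ⟨d, c, hdc⟩ := exists_liftPoly_eq_sum hl hlk (ξ - η) ((p : ℤ) ^ a)
  have hp0 : (p : ℤ) ^ ((k - l + 1) * a) ≠ 0 := pow_ne_zero _ (by exact_mod_cast hp.ne_zero)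
  refine Int.dvd_of_mul_dvd_mul_left hp0 ?_
  rw [← pow_add, Nat.add_sub_cancel' hle, mul_sub, Finset.mul_sum, Finset.mul_sum]
  have hpow : (p : ℤ) ^ ((k - l + 1) * a) = ((p : ℤ) ^ a) ^ (k - l + 1) := by
    rw [← pow_mul, mul_comm]
  have key : ∀ (z w : Fin r → ℤ), (∀ i, z i = ξ + (p : ℤ) ^ a * w i) →
      ∑ i, (p : ℤ) ^ ((k - l + 1) * a) * (liftPoly k l (ξ - η) ((p : ℤ) ^ a)).eval (w i)
        = r * d + ∑ j ∈ Finset.Icc l k, c j * ∑ i, (z i - η) ^ j := by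
    intro z w hz
    rw [hpow, Finset.sum_congr rfl fun i _ => hdc (w i), Finset.sum_add_distrib,
      Finset.sum_comm]
    simp only [Finset.sum_const, Finset.card_univ, Fintype.card_fin, nsmul_eq_mul,
      ← Finset.mul_sum]
    refine congrArg _ (Finset.sum_congr rfl fun j _ => ?_)
    refine congrArg _ (Finset.sum_congr rfl fun i _ => ?_)
    rw [hz]
    ring
  rw [key z w hz, key z' w' hz', add_sub_add_left_eq_sub, ← Finset.sum_sub_distrib]
  refine Finset.dvd_sum fun j hj => ?_
  rw [← mul_sub]
  have hj' := Finset.mem_Icc.1 hj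
  exact Dvd.dvd.mul_left ((pow_dvd_pow _ (Nat.mul_le_mul_right b hj'.1)).trans
    (h j (Finset.mem_Icc.2 ⟨by omega, hj'.2⟩))) _

/-- Solutions of the congruences with the same values of the lifting polynomials agree modulo `p`
up to a rearrangement of coordinates. -/
lemma exists_residue_eq (hp : p.Prime) (hrk : r ≤ k) (hkp : k < p) (hb : 1 ≤ b)
    (hω : ¬ (p : ℤ) ∣ ξ - η) {z z' w w' : Fin r → ℤ}
    (hz : ∀ i, z i = ξ + (p : ℤ) ^ a * w i) (hz' : ∀ i, z' i = ξ + (p : ℤ) ^ a * w' i)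
    (h : ∀ j ∈ Finset.Icc 1 k, (p : ℤ) ^ (j * b) ∣ ∑ i, (z i - η) ^ j - ∑ i, (z' i - η) ^ j)
    (hQ : ∀ l ∈ Finset.Icc (k - r + 1) k, (p : ℤ) ∣
      ∑ i, (liftPoly k l (ξ - η) ((p : ℤ) ^ a)).eval (w i)
        - ∑ i, (liftPoly k l (ξ - η) ((p : ℤ) ^ a)).eval (w' i)) (i : Fin r) :
    ∃ j, (p : ℤ) ∣ w' i - w j := by
  have : Fact p.Prime := ⟨hp⟩
  have hK : ∀ j : ℕ, 1 ≤ j → j ≤ r → ((j : ℕ) : ZMod p) ≠ 0 := by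
    intro j hj1 hjr h0
    have := Nat.le_of_dvd hj1 ((ZMod.natCast_eq_zero_iff _ _).1 h0)
    omega
  rcases Nat.eq_zero_or_pos a with rfl | ha
  · obtain ⟨j, hj⟩ := exists_eq_of_powerSum_eq hK (fun i => ((z i - η : ℤ) : ZMod p))
      (fun i => ((z' i - η : ℤ) : ZMod p)) (by
        intro j hj1 hjr
        have h1 : (p : ℤ) ∣ ∑ i, (z i - η) ^ j - ∑ i, (z' i - η) ^ j :=
          (dvd_pow_self _ (Nat.mul_ne_zero (by omega) (by omega))).trans
            (h j (Finset.mem_Icc.2 ⟨hj1, hjr.trans hrk⟩))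
        rw [← ZMod.intCast_zmod_eq_zero_iff_dvd] at h1
        push_cast at h1 ⊢
        exact sub_eq_zero.1 h1) i
    refine ⟨j, ?_⟩
    rw [← ZMod.intCast_zmod_eq_zero_iff_dvd]
    simp only [hz, hz'] at hj
    push_cast at hj ⊢
    linear_combination hj
  · obtain ⟨j, hj⟩ := exists_eq_of_powerSum_eq hK (fun i => ((w i : ℤ) : ZMod p))
      (fun i => ((w' i : ℤ) : ZMod p)) (by
        intro j hj1 hjr
        have hl : k - j + 1 ∈ Finset.Icc (k - r + 1) k := Finset.mem_Icc.2 ⟨by omega, by omega⟩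
        have hkl : k - (k - j + 1) + 1 = j := by omega
        set c : ℤ := ((k.factorial / j : ℕ) : ℤ) * (ξ - η) ^ (k - j + 1 - 1) with hc
        have hcp : ¬ (p : ℤ) ∣ c := by
          intro hdvd
          rcases (Nat.prime_iff_prime_int.1 hp).dvd_or_dvd hdvd with h1 | h1
          · have h2 := (Int.natCast_dvd_natCast.1 h1).trans
              (Nat.div_dvd_of_dvd (Nat.dvd_factorial hj1 (hjr.trans hrk)))
            have := hp.dvd_factorial.1 h2
            omega
          · exact hω ((Nat.prime_iff_prime_int.1 hp).dvd_of_dvd_pow h1)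
        have hmod : ∀ w : Fin r → ℤ, (p : ℤ) ∣
            ∑ i, (liftPoly k (k - j + 1) (ξ - η) ((p : ℤ) ^ a)).eval (w i) - c * ∑ i, w i ^ j := by
          intro w
          rw [Finset.mul_sum, ← Finset.sum_sub_distrib]
          refine Finset.dvd_sum fun i _ => ?_
          have := liftPoly_eval_congr (k := k) (l := k - j + 1) (by omega) (by omega)
            (ω := ξ - η) (dvd_pow_self (p : ℤ) ha.ne') (w i)
          rwa [hkl] at this
        have h1 : (p : ℤ) ∣ c * (∑ i, w i ^ j - ∑ i, w' i ^ j) := by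
          rw [show c * (∑ i, w i ^ j - ∑ i, w' i ^ j) = (∑ i, (liftPoly k (k - j + 1) (ξ - η)
            ((p : ℤ) ^ a)).eval (w' i) - c * ∑ i, w' i ^ j) - (∑ i, (liftPoly k (k - j + 1) (ξ - η)
            ((p : ℤ) ^ a)).eval (w i) - c * ∑ i, w i ^ j) + (∑ i, (liftPoly k (k - j + 1) (ξ - η)
            ((p : ℤ) ^ a)).eval (w i) - ∑ i, (liftPoly k (k - j + 1) (ξ - η)
            ((p : ℤ) ^ a)).eval (w' i)) by ring]
          exact dvd_add (dvd_sub (hmod w') (hmod w)) (hQ _ hl)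
        have h2 := ((Nat.prime_iff_prime_int.1 hp).dvd_or_dvd h1).resolve_left hcp
        rw [← ZMod.intCast_zmod_eq_zero_iff_dvd] at h2
        push_cast at h2 ⊢
        exact sub_eq_zero.1 h2) i
    refine ⟨j, ?_⟩
    rw [← ZMod.intCast_zmod_eq_zero_iff_dvd]
    push_cast
    exact sub_eq_zero.2 hj

/-- The number of classes modulo `p ^ (t * b)` of solutions of the auxiliary congruences. -/
theorem card_congruence_classes (hp : p.Prime) (hrk : r ≤ k) (hkp : k < p)
    (ht1 : 1 ≤ t) (h2t : k ≤ 2 * t + 1) (hab : a < b) (htab : t * a ≤ b)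
    (hω : ¬ (p : ℤ) ∣ ξ - η) (Z : Finset (Fin r → ℤ))
    (hξ : ∀ z ∈ Z, ∀ i, (p : ℤ) ^ a ∣ z i - ξ)
    (hη : ∀ z ∈ Z, ∀ i, ¬ (p : ℤ) ∣ z i - η)
    (hdist : ∀ z ∈ Z, ∀ i j, i ≠ j → ¬ (p : ℤ) ^ (a + 1) ∣ z i - z j)
    (hcong : ∀ z ∈ Z, ∀ z' ∈ Z, ∀ j ∈ Finset.Icc 1 k,
      (p : ℤ) ^ (j * b) ∣ ∑ i, (z i - η) ^ j - ∑ i, (z' i - η) ^ j)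
    (hineq : ∀ z ∈ Z, ∀ z' ∈ Z, (∀ i, (p : ℤ) ^ (t * b) ∣ z i - z' i) → z = z') :
    Z.card ≤ r ^ r * p ^ (∑ l ∈ Finset.Icc (k - r + 1) t, ((t - l) * b + (k - l) * a)) := by
  rcases Z.eq_empty_or_nonempty with rfl | ⟨z₀, hz₀⟩
  · simp
  have hp0 : (p : ℤ) ≠ 0 := by exact_mod_cast hp.ne_zero
  have hNe : ∀ n : ℕ, NeZero (p ^ n) := fun n => ⟨pow_ne_zero _ hp.ne_zero⟩
  set w : (Fin r → ℤ) → Fin r → ℤ := fun z i => (z i - ξ) / (p : ℤ) ^ a with hwdef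
  have hzw : ∀ z ∈ Z, ∀ i, z i = ξ + (p : ℤ) ^ a * w z i := by
    intro z hz i
    rw [hwdef, Int.mul_ediv_cancel' (hξ z hz i)]
    ring
  set G : ℕ → (Fin r → ℤ) → ℤ :=
    fun l z => ∑ i, (liftPoly k l (ξ - η) ((p : ℤ) ^ a)).eval (w z i) with hG
  set e : ℕ → ℕ := fun l => l * b - (k - l + 1) * a with he
  set d : ℕ → ℕ := fun l => (t - l) * b + (k - l) * a with hd
  have hGe : ∀ l, 1 ≤ l → l ≤ k → ∀ z ∈ Z, ∀ z' ∈ Z, (p : ℤ) ^ e l ∣ G l z - G l z' :=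
    fun l hl hlk z hz z' hz' =>
      dvd_sum_liftPoly_sub hp hl hlk (hzw z hz) (hzw z' hz') (hcong z hz z' hz')
  set label : (Fin r → ℤ) → (l : ↥(Finset.Icc (k - r + 1) t)) → ZMod (p ^ d l) :=
    fun z l => (((G l z - G l z₀) / (p : ℤ) ^ e l : ℤ) : ZMod (p ^ d l)) with hlabel
  have hTle : ∀ l, l ≤ t → t * b - a ≤ e l + d l := by
    intro l hlt
    have h1 : (t - l) * b + l * b = t * b := by rw [← add_mul, Nat.sub_add_cancel hlt]
    have h2 : (k - l + 1) * a = (k - l) * a + a := by ring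
    simp only [he, hd]
    omega
  have hsame : ∀ z ∈ Z, ∀ z' ∈ Z, label z = label z' → ∀ l ∈ Finset.Icc (k - r + 1) k,
      (p : ℤ) ^ (t * b - a) ∣ G l z - G l z' := by
    intro z hz z' hz' hzz l hl
    have hl' := Finset.mem_Icc.1 hl
    rcases le_or_gt l t with hlt | hlt
    · refine (pow_dvd_pow _ (hTle l hlt)).trans ?_
      have h1 := congrFun hzz ⟨l, Finset.mem_Icc.2 ⟨hl'.1, hlt⟩⟩
      simp only [hlabel] at h1
      rw [← sub_eq_zero, ← Int.cast_sub, ZMod.intCast_zmod_eq_zero_iff_dvd] at h1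
      obtain ⟨u, hu⟩ := hGe l (by omega) hl'.2 z hz z₀ hz₀
      obtain ⟨u', hu'⟩ := hGe l (by omega) hl'.2 z' hz' z₀ hz₀
      rw [hu, hu', Int.mul_ediv_cancel_left _ (pow_ne_zero _ hp0),
        Int.mul_ediv_cancel_left _ (pow_ne_zero _ hp0)] at h1
      push_cast at h1
      have h2 : G l z - G l z' = (p : ℤ) ^ e l * (u - u') := by linear_combination hu - hu'
      rw [h2, pow_add]
      exact mul_dvd_mul_left _ h1
    · refine (pow_dvd_pow _ ?_).trans (hGe l (by omega) hl'.2 z hz z' hz')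
      have h1 : (k - l) * a ≤ t * a := Nat.mul_le_mul_right a (by omega)
      have h2 : (t + 1) * b ≤ l * b := Nat.mul_le_mul_right b hlt
      have h3 : (k - l + 1) * a = (k - l) * a + a := by ring
      have h4 : (t + 1) * b = t * b + b := by ring
      simp only [he]
      omega
  have hTpos : t * b - a ≠ 0 := by
    have : 1 * b ≤ t * b := Nat.mul_le_mul_right b ht1
    omega
  have haT : a + (t * b - a) = t * b := by
    have : 1 * b ≤ t * b := Nat.mul_le_mul_right b ht1
    omega
  have hfiber : ∀ y ∈ Z.image label, (Z.filter fun z => label z = y).card ≤ r ^ r := by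
    intro y hy
    obtain ⟨z₁, hz₁, rfl⟩ := Finset.mem_image.1 hy
    have hσ : ∀ z : Fin r → ℤ, ∃ σ : Fin r → Fin r, z ∈ Z → label z = label z₁ →
        ∀ i, (p : ℤ) ∣ w z i - w z₁ (σ i) := by
      intro z
      by_cases hz : z ∈ Z ∧ label z = label z₁
      · have hex := exists_residue_eq hp hrk hkp (by omega : 1 ≤ b) hω (hzw z₁ hz₁) (hzw z hz.1)
          (hcong z₁ hz₁ z hz.1)
          (fun l hl => (dvd_pow_self _ hTpos).trans (hsame z₁ hz₁ z hz.1 hz.2.symm l hl))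
        choose σ hσ using hex
        exact ⟨σ, fun _ _ => hσ⟩
      · exact ⟨id, fun h1 h2 => absurd ⟨h1, h2⟩ hz⟩
    choose σ hσ using hσ
    have hcard : (Finset.univ : Finset (Fin r → Fin r)).card = r ^ r := by simp
    rw [← hcard]
    refine Finset.card_le_card_of_injOn σ (fun _ _ => Finset.mem_univ _) ?_
    intro z hz z' hz' hzz
    have hz := Finset.mem_filter.1 hz
    have hz' := Finset.mem_filter.1 hz'
    refine hineq z hz.1 z' hz'.1 fun i => ?_
    have hmod : ∀ i, (p : ℤ) ∣ w z i - w z' i := by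
      intro i
      have h1 := hσ z hz.1 hz.2 i
      have h2 := hσ z' hz'.1 hz'.2 i
      rw [← hzz] at h2
      have := dvd_sub h1 h2
      rwa [sub_sub_sub_cancel_right] at this
    have hlift := liftPoly_hensel (w := w z') (w' := w z) hp hrk hkp hω
      (q := (p : ℤ) ^ a) (T := t * b - a)
      (fun i => by
        have := hη z' hz'.1 i
        rw [hzw z' hz'.1 i] at this
        convert this using 2
        ring)
      (fun i j hij hdvd => hdist z' hz'.1 i j hij (by
        rw [hzw z' hz'.1 i, hzw z' hz'.1 j, add_sub_add_left_eq_sub, ← mul_sub, pow_succ]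
        exact mul_dvd_mul_left _ hdvd))
      hmod (hsame z hz.1 z' hz'.1 (hz.2.trans hz'.2.symm)) i
    rw [hzw z hz.1 i, hzw z' hz'.1 i, add_sub_add_left_eq_sub, ← mul_sub, ← haT, pow_add]
    exact mul_dvd_mul_left _ hlift
  refine (Finset.card_le_mul_card_image Z (r ^ r) hfiber).trans (Nat.mul_le_mul_left _ ?_)
  refine (Finset.card_le_univ _).trans (le_of_eq ?_)
  rw [Fintype.card_pi, ← Finset.prod_pow_eq_pow_sum]
  refine Eq.trans ?_ (Finset.prod_coe_sort (Finset.Icc (k - r + 1) t) fun l => p ^ d l)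
  exact Finset.prod_congr rfl fun l _ => ZMod.card (p ^ d l)

end Congruences

/-! ### Trigonometric sums on the unit box -/

section Trig

variable {k : ℕ}

/-- The character of `ℝ^k` with integral frequency vector `n`. -/
def chr (n : Fin k → ℤ) (α : Fin k → ℝ) : ℂ := ec (∑ j, α j * (n j : ℝ))

lemma ec_add (x y : ℝ) : ec (x + y) = ec x * ec y := by
  unfold ec
  rw [← Complex.exp_add]
  push_cast
  ring_nf

lemma ec_zero : ec 0 = 1 := by simp [ec]

lemma ec_sum {ι : Type*} (s : Finset ι) (x : ι → ℝ) : ec (∑ i ∈ s, x i) = ∏ i ∈ s, ec (x i) := by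
  induction s using Finset.cons_induction with
  | empty => simp [ec_zero]
  | cons a s ha ih => rw [Finset.sum_cons, Finset.prod_cons, ec_add, ih]

lemma norm_ec (x : ℝ) : ‖ec x‖ = 1 := by
  unfold ec
  have : (2 * Real.pi * Complex.I * x : ℂ) = ((2 * Real.pi * x : ℝ) : ℂ) * Complex.I := by
    push_cast; ring
  rw [this, Complex.norm_exp_ofReal_mul_I]

lemma continuous_ec : Continuous ec := by
  unfold ec; fun_prop

lemma chr_zero (α : Fin k → ℝ) : chr 0 α = 1 := by simp [chr, ec_zero]

lemma chr_add (m n : Fin k → ℤ) (α : Fin k → ℝ) : chr (m + n) α = chr m α * chr n α := by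
  unfold chr
  rw [← ec_add, ← Finset.sum_add_distrib]
  congr 1
  refine Finset.sum_congr rfl fun j _ => ?_
  simp only [Pi.add_apply, Int.cast_add]
  ring

lemma chr_sum {ι : Type*} (s : Finset ι) (n : ι → Fin k → ℤ) (α : Fin k → ℝ) :
    chr (∑ i ∈ s, n i) α = ∏ i ∈ s, chr (n i) α := by
  induction s using Finset.cons_induction with
  | empty => simp [chr_zero]
  | cons a s ha ih => rw [Finset.sum_cons, Finset.prod_cons, chr_add, ih]

lemma norm_chr (n : Fin k → ℤ) (α : Fin k → ℝ) : ‖chr n α‖ = 1 := norm_ec _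

lemma star_chr (n : Fin k → ℤ) (α : Fin k → ℝ) : star (chr n α) = chr (-n) α := by
  have h1 : chr n α * chr (-n) α = 1 := by rw [← chr_add, add_neg_cancel, chr_zero]
  have h2 : chr n α * star (chr n α) = 1 := by
    rw [Complex.star_def, Complex.mul_conj, Complex.normSq_eq_norm_sq, norm_chr]
    simp
  have h0 : chr n α ≠ 0 := by
    intro h
    have := norm_chr n α
    rw [h, norm_zero] at this
    exact zero_ne_one this
  exact mul_left_cancel₀ h0 (h2.trans h1.symm)

lemma continuous_chr (n : Fin k → ℤ) : Continuous (chr n) := by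
  unfold chr
  exact continuous_ec.comp (by fun_prop)

lemma integrableOn_box {E : Type*} [NormedAddCommGroup E] {f : (Fin k → ℝ) → E}
    (hf : Continuous f) : IntegrableOn f (_root_.box k) := by
  have hsub : _root_.box k ⊆ Set.Icc 0 1 := by
    intro α hα
    rw [_root_.box, Set.mem_univ_pi] at hα
    exact ⟨fun i => (hα i).1, fun i => (hα i).2.le⟩
  exact (hf.continuousOn.integrableOn_compact isCompact_Icc).mono_set hsub

lemma setIntegral_ec (n : ℤ) :
    ∫ x in Set.Ico (0 : ℝ) 1, ec (x * (n : ℝ)) = if n = 0 then 1 else 0 := by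
  split_ifs with h
  · subst h
    simp [ec_zero]
  · rw [MeasureTheory.integral_Ico_eq_integral_Ioc,
      ← intervalIntegral.integral_of_le zero_le_one]
    have hc : (2 * Real.pi * Complex.I * n : ℂ) ≠ 0 := by
      have hn : (n : ℂ) ≠ 0 := by exact_mod_cast h
      exact mul_ne_zero Complex.two_pi_I_ne_zero hn
    have h1 : ∀ x : ℝ, ec (x * (n : ℝ)) = Complex.exp ((2 * Real.pi * Complex.I * n : ℂ) * x) := by
      intro x
      unfold ec
      push_cast
      ring_nf
    simp only [h1]
    rw [integral_exp_mul_complex hc]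
    have h2 : Complex.exp (2 * Real.pi * Complex.I * n * ((1 : ℝ) : ℂ)) = 1 := by
      rw [Complex.exp_eq_one_iff]
      exact ⟨n, by push_cast; ring⟩
    rw [h2]
    simp

/-- Orthogonality of characters. -/
lemma integral_chr (n : Fin k → ℤ) : ∫ α in _root_.box k, chr n α = if n = 0 then 1 else 0 := by
  unfold chr _root_.box
  simp only [ec_sum]
  rw [volume_pi, Measure.restrict_pi_pi]
  rw [MeasureTheory.integral_fintype_prod_eq_prod
    (f := fun (j : Fin k) (x : ℝ) => ec (x * (n j : ℝ)))]
  simp only [setIntegral_ec]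
  split_ifs with h
  · subst h; simp
  · obtain ⟨j, hj⟩ := Function.ne_iff.1 h
    exact Finset.prod_eq_zero (Finset.mem_univ j) (if_neg hj)

/-- A sum of characters (with multiplicities) whose frequencies all lie in `Q`. -/
def IsTrigSum (Q : AddSubgroup (Fin k → ℤ)) (G : (Fin k → ℝ) → ℂ) : Prop :=
  ∃ s : Multiset (Fin k → ℤ), (∀ n ∈ s, n ∈ Q) ∧ ∀ α, G α = (s.map fun n => chr n α).sum

namespace IsTrigSum

variable {Q : AddSubgroup (Fin k → ℤ)} {F G : (Fin k → ℝ) → ℂ}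

lemma zero : IsTrigSum Q (fun _ => 0) := ⟨0, by simp, by simp⟩

lemma chr {n : Fin k → ℤ} (hn : n ∈ Q) : IsTrigSum Q (chr n) := ⟨{n}, by simpa, by simp⟩

lemma one : IsTrigSum Q (fun _ => 1) := ⟨{0}, by simp [Q.zero_mem], by simp [chr_zero]⟩

lemma add (hF : IsTrigSum Q F) (hG : IsTrigSum Q G) : IsTrigSum Q (fun α => F α + G α) := by
  obtain ⟨s, hs, hFs⟩ := hF
  obtain ⟨u, hu, hGu⟩ := hG
  refine ⟨s + u, fun n hn => (Multiset.mem_add.1 hn).elim (hs n) (hu n), fun α => ?_⟩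
  dsimp only
  rw [hFs, hGu, Multiset.map_add, Multiset.sum_add]

lemma mul (hF : IsTrigSum Q F) (hG : IsTrigSum Q G) : IsTrigSum Q (fun α => F α * G α) := by
  obtain ⟨s, hs, hFs⟩ := hF
  obtain ⟨u, hu, hGu⟩ := hG
  refine ⟨(s ×ˢ u).map fun x => x.1 + x.2, fun n hn => ?_, fun α => ?_⟩
  · obtain ⟨x, hx, rfl⟩ := Multiset.mem_map.1 hn
    have := Multiset.mem_product.1 hx
    exact Q.add_mem (hs _ this.1) (hu _ this.2)
  · dsimp only
    rw [hFs, hGu, Multiset.map_map]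
    simp only [Function.comp_def, chr_add]
    clear hFs hs
    induction s using Multiset.induction with
    | empty => simp
    | cons n s ih =>
      rw [Multiset.map_cons, Multiset.sum_cons, add_mul, ih, Multiset.cons_product,
        Multiset.map_add, Multiset.sum_add, Multiset.map_map, ← Multiset.sum_map_mul_left]
      rfl

lemma pow (hF : IsTrigSum Q F) (n : ℕ) : IsTrigSum Q (fun α => F α ^ n) := by
  induction n with
  | zero => simpa using one
  | succ n ih => simpa only [pow_succ] using ih.mul hF

lemma sum {ι : Type*} (s : Finset ι) {F : ι → (Fin k → ℝ) → ℂ} (h : ∀ i ∈ s, IsTrigSum Q (F i)) :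
    IsTrigSum Q (fun α => ∑ i ∈ s, F i α) := by
  induction s using Finset.cons_induction with
  | empty => simpa using zero
  | cons a s ha ih =>
    simp only [Finset.sum_cons]
    exact (h a (Finset.mem_cons_self a s)).add
      (ih fun i hi => h i (Finset.mem_cons_of_mem hi))

lemma star (hF : IsTrigSum Q F) : IsTrigSum Q (fun α => star (F α)) := by
  obtain ⟨s, hs, hFs⟩ := hF
  refine ⟨s.map fun n => -n, fun n hn => ?_, fun α => ?_⟩
  · obtain ⟨m, hm, rfl⟩ := Multiset.mem_map.1 hn
    exact Q.neg_mem (hs m hm)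
  · dsimp only
    rw [hFs, Multiset.map_map]
    have : (Star.star (s.map fun n => _root_.chr n α).sum : ℂ)
        = ((s.map fun n => _root_.chr n α).map (starRingEnd ℂ)).sum :=
      map_multiset_sum (starRingEnd ℂ) _
    rw [this, Multiset.map_map]
    congr 1
    refine Multiset.map_congr rfl fun n _ => ?_
    exact star_chr n α

lemma continuous (hF : IsTrigSum Q F) : Continuous F := by
  obtain ⟨s, -, hFs⟩ := hF
  have : F = fun α => (s.map fun n => _root_.chr n α).sum := funext hFs
  rw [this]
  exact continuous_multiset_sum s fun n _ => continuous_chr n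

lemma integral_eq (hF : IsTrigSum Q F) : ∃ c : ℝ, 0 ≤ c ∧ ∫ α in _root_.box k, F α = c := by
  obtain ⟨s, -, hFs⟩ := hF
  simp only [hFs]
  clear hFs
  induction s using Multiset.induction with
  | empty => exact ⟨0, le_rfl, by simp⟩
  | cons n s ih =>
    obtain ⟨c, hc, hcs⟩ := ih
    refine ⟨(if n = 0 then 1 else 0) + c, add_nonneg (by split_ifs <;> norm_num) hc, ?_⟩
    simp only [Multiset.map_cons, Multiset.sum_cons]
    rw [integral_add (integrableOn_box (continuous_chr n))
      (integrableOn_box (continuous_multiset_sum s fun n _ => continuous_chr n)), hcs, integral_chr]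
    push_cast
    split_ifs <;> simp

lemma integral_mul_chr_eq_zero (hF : IsTrigSum Q F) {m : Fin k → ℤ} (hm : m ∉ Q) :
    ∫ α in _root_.box k, F α * _root_.chr m α = 0 := by
  obtain ⟨s, hs, hFs⟩ := hF
  simp only [hFs]
  clear hFs
  induction s using Multiset.induction with
  | empty => simp
  | cons n s ih =>
    simp only [Multiset.map_cons, Multiset.sum_cons, add_mul, ← chr_add]
    have hcont : Continuous fun α => (s.map fun n => _root_.chr n α).sum * _root_.chr m α :=
      (continuous_multiset_sum s fun n _ => continuous_chr n).mul (continuous_chr m)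
    rw [integral_add (integrableOn_box (continuous_chr _)) (integrableOn_box hcont),
      integral_chr, if_neg, zero_add]
    · exact ih fun n hn => hs n (Multiset.mem_cons_of_mem hn)
    · intro h0
      refine hm ?_
      rw [← neg_eq_of_add_eq_zero_right h0]
      exact Q.neg_mem (hs n (Multiset.mem_cons_self n s))

end IsTrigSum

end Trig

/-! ### Mean value inequalities -/

section MeanValues

variable {k : ℕ}

/-- A form of Hölder's inequality with integral exponents. -/
theorem integral_pow_mul_pow_le {u w h : (Fin k → ℝ) → ℝ} (hu : Continuous u) (hw : Continuous w)
    (hh : Continuous h) (hu0 : ∀ α, 0 ≤ u α) (hw0 : ∀ α, 0 ≤ w α) (hh0 : ∀ α, 0 ≤ h α)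
    {i n : ℕ} (hin : i ≤ n) (hn : 1 ≤ n) :
    (∫ α in _root_.box k, u α ^ i * w α ^ (n - i) * h α) ^ n ≤
      (∫ α in _root_.box k, u α ^ n * h α) ^ i * (∫ α in _root_.box k, w α ^ n * h α) ^ (n - i) := by
  have hn0 : (n : ℝ) ≠ 0 := by positivity
  set I := ∫ α in _root_.box k, u α ^ i * w α ^ (n - i) * h α
  set A := ∫ α in _root_.box k, u α ^ n * h α
  set B := ∫ α in _root_.box k, w α ^ n * h α
  have hA : 0 ≤ A := integral_nonneg fun α => mul_nonneg (pow_nonneg (hu0 α) _) (hh0 α)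
  have hB : 0 ≤ B := integral_nonneg fun α => mul_nonneg (pow_nonneg (hw0 α) _) (hh0 α)
  have hI : 0 ≤ I := integral_nonneg fun α =>
    mul_nonneg (mul_nonneg (pow_nonneg (hu0 α) _) (pow_nonneg (hw0 α) _)) (hh0 α)
  have amgm : ∀ x y : ℝ, 0 ≤ x → 0 ≤ y →
      x ^ i * y ^ (n - i) ≤ (i / n : ℝ) * x ^ n + ((n - i : ℕ) / n : ℝ) * y ^ n := by
    intro x y hx hy
    have := Real.geom_mean_le_arith_mean2_weighted (w₁ := (i / n : ℝ)) (w₂ := ((n - i : ℕ) / n : ℝ))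
      (p₁ := x ^ n) (p₂ := y ^ n) (by positivity) (by positivity) (by positivity) (by positivity)
      (by rw [← add_div, ← Nat.cast_add, Nat.add_sub_cancel' hin, div_self hn0])
    rwa [← Real.rpow_natCast x n, ← Real.rpow_natCast y n, ← Real.rpow_mul hx, ← Real.rpow_mul hy,
      mul_div_cancel₀ _ hn0, mul_div_cancel₀ _ hn0, Real.rpow_natCast, Real.rpow_natCast,
      Real.rpow_natCast, Real.rpow_natCast] at this
  have key : ∀ ε : ℝ, 0 < ε → I ^ n ≤ (A + ε) ^ i * (B + ε) ^ (n - i) := by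
    intro ε hε
    obtain ⟨a, ha, han⟩ : ∃ a : ℝ, 0 < a ∧ a ^ n = A + ε :=
      ⟨(A + ε) ^ (1 / n : ℝ), by positivity, by
        rw [← Real.rpow_natCast, ← Real.rpow_mul (by positivity), one_div_mul_cancel hn0,
          Real.rpow_one]⟩
    obtain ⟨b, hb, hbn⟩ : ∃ b : ℝ, 0 < b ∧ b ^ n = B + ε :=
      ⟨(B + ε) ^ (1 / n : ℝ), by positivity, by
        rw [← Real.rpow_natCast, ← Real.rpow_mul (by positivity), one_div_mul_cancel hn0,
          Real.rpow_one]⟩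
    have h1 : I ≤ a ^ i * b ^ (n - i) * ((i / n : ℝ) / (A + ε) * A +
        ((n - i : ℕ) / n : ℝ) / (B + ε) * B) := by
      have hpt : ∀ α, u α ^ i * w α ^ (n - i) * h α ≤ a ^ i * b ^ (n - i) *
          ((i / n : ℝ) / (A + ε) * (u α ^ n * h α) +
            ((n - i : ℕ) / n : ℝ) / (B + ε) * (w α ^ n * h α)) := by
        intro α
        have := amgm (u α / a) (w α / b) (div_nonneg (hu0 α) ha.le) (div_nonneg (hw0 α) hb.le)
        have h2 : u α ^ i * w α ^ (n - i) =
            a ^ i * b ^ (n - i) * ((u α / a) ^ i * (w α / b) ^ (n - i)) := by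
          rw [div_pow, div_pow]; field_simp
        calc u α ^ i * w α ^ (n - i) * h α
            ≤ a ^ i * b ^ (n - i) * ((i / n : ℝ) * (u α / a) ^ n +
                ((n - i : ℕ) / n : ℝ) * (w α / b) ^ n) * h α := by
              rw [h2]
              have := hh0 α
              gcongr
          _ = _ := by rw [div_pow, div_pow, han, hbn]; ring
      have hi1 : Continuous fun α => (i / n : ℝ) / (A + ε) * (u α ^ n * h α) := by fun_prop
      have hi2 : Continuous fun α => ((n - i : ℕ) / n : ℝ) / (B + ε) * (w α ^ n * h α) := by fun_prop
      calc I ≤ ∫ α in _root_.box k, a ^ i * b ^ (n - i) *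
          ((i / n : ℝ) / (A + ε) * (u α ^ n * h α) +
            ((n - i : ℕ) / n : ℝ) / (B + ε) * (w α ^ n * h α)) :=
            integral_mono (integrableOn_box (by fun_prop)) (integrableOn_box (by fun_prop)) hpt
        _ = _ := by
          rw [integral_const_mul, integral_add (integrableOn_box hi1) (integrableOn_box hi2),
            integral_const_mul, integral_const_mul]
    have h2 : (i / n : ℝ) / (A + ε) * A + ((n - i : ℕ) / n : ℝ) / (B + ε) * B ≤ 1 := by
      have e1 : (i / n : ℝ) / (A + ε) * A ≤ i / n := by
        rw [div_mul_eq_mul_div, div_le_iff₀ (by positivity)]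
        exact mul_le_mul_of_nonneg_left (by linarith) (by positivity)
      have e2 : ((n - i : ℕ) / n : ℝ) / (B + ε) * B ≤ (n - i : ℕ) / n := by
        rw [div_mul_eq_mul_div, div_le_iff₀ (by positivity)]
        exact mul_le_mul_of_nonneg_left (by linarith) (by positivity)
      have e3 : (i / n : ℝ) + (n - i : ℕ) / n = 1 := by
        rw [← add_div, ← Nat.cast_add, Nat.add_sub_cancel' hin, div_self hn0]
      linarith
    have h3 : I ≤ a ^ i * b ^ (n - i) :=
      h1.trans (mul_le_of_le_one_right (by positivity) h2)
    calc I ^ n ≤ (a ^ i * b ^ (n - i)) ^ n := pow_le_pow_left₀ hI h3 n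
      _ = (a ^ n) ^ i * (b ^ n) ^ (n - i) := by
        rw [mul_pow, ← pow_mul, ← pow_mul, ← pow_mul, ← pow_mul, mul_comm i, mul_comm (n - i)]
      _ = _ := by rw [han, hbn]
  have hlim : Tendsto (fun ε : ℝ => (A + ε) ^ i * (B + ε) ^ (n - i)) (nhdsWithin 0 (Set.Ioi 0))
      (nhds (A ^ i * B ^ (n - i))) := by
    have hc : Continuous fun ε : ℝ => (A + ε) ^ i * (B + ε) ^ (n - i) := by fun_prop
    have := hc.tendsto 0
    simp only [add_zero] at this
    exact this.mono_left nhdsWithin_le_nhds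
  exact ge_of_tendsto hlim (eventually_mem_nhdsWithin.mono fun ε hε => key ε hε)

lemma prod_le_sum_pow {r : ℕ} (hr : 1 ≤ r) {g : Fin r → ℝ} (hg : ∀ i, 0 ≤ g i) :
    ∏ i, g i ≤ ∑ i, g i ^ r := by
  have : Nonempty (Fin r) := ⟨⟨0, hr⟩⟩
  obtain ⟨j, -, hj⟩ := Finset.exists_max_image (Finset.univ : Finset (Fin r)) g
    Finset.univ_nonempty
  calc ∏ i, g i ≤ ∏ _i : Fin r, g j :=
        Finset.prod_le_prod (fun i _ => hg i) fun i hi => hj i hi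
    _ = g j ^ r := by simp
    _ ≤ ∑ i, g i ^ r :=
        Finset.single_le_sum (f := fun i => g i ^ r) (fun i _ => pow_nonneg (hg i) r)
          (Finset.mem_univ j)

lemma ofReal_norm_sq_sum_chr {ι : Type*} (S : Finset ι) (φ : ι → Fin k → ℤ) (α : Fin k → ℝ) :
    ((‖∑ u ∈ S, chr (φ u) α‖ ^ 2 : ℝ) : ℂ) = ∑ u ∈ S, ∑ v ∈ S, chr (φ u - φ v) α := by
  rw [← Complex.normSq_eq_norm_sq, ← Complex.mul_conj, map_sum, Finset.sum_mul_sum]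
  refine Finset.sum_congr rfl fun u _ => Finset.sum_congr rfl fun v _ => ?_
  rw [sub_eq_add_neg, chr_add, ← star_chr]
  rfl

lemma continuous_sum_chr {ι : Type*} (S : Finset ι) (φ : ι → Fin k → ℤ) :
    Continuous fun α => ∑ u ∈ S, chr (φ u) α :=
  continuous_finsetSum _ fun u _ => continuous_chr (φ u)

/-- Characters in different cosets of the frequency group of the weight are orthogonal. -/
lemma integral_norm_sq_eq_sum_fibers {ι : Type*} {Q : AddSubgroup (Fin k → ℤ)}
    {H : (Fin k → ℝ) → ℝ} (hH : IsTrigSum Q fun α => (H α : ℂ)) (S : Finset ι) (φ : ι → Fin k → ℤ)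
    (T : Finset ((Fin k → ℤ) ⧸ Q)) (hT : ∀ u ∈ S, (φ u : (Fin k → ℤ) ⧸ Q) ∈ T) :
    ∫ α in _root_.box k, ‖∑ u ∈ S, chr (φ u) α‖ ^ 2 * H α =
      ∑ l ∈ T, ∫ α in _root_.box k,
        ‖∑ u ∈ S with (φ u : (Fin k → ℤ) ⧸ Q) = l, chr (φ u) α‖ ^ 2 * H α := by
  have hexp : ∀ P : Finset ι,
      ((∫ α in _root_.box k, ‖∑ u ∈ P, chr (φ u) α‖ ^ 2 * H α : ℝ) : ℂ) =
        ∑ u ∈ P, ∑ v ∈ P, ∫ α in _root_.box k, (H α : ℂ) * chr (φ u - φ v) α := by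
    intro P
    rw [← integral_complex_ofReal]
    have hc : ∀ u v, IntegrableOn (fun α => (H α : ℂ) * chr (φ u - φ v) α) (_root_.box k) :=
      fun u v => integrableOn_box (hH.continuous.mul (continuous_chr _))
    simp only [Complex.ofReal_mul, ofReal_norm_sq_sum_chr, mul_comm _ (H _ : ℂ),
      Finset.mul_sum]
    rw [integral_finsetSum _ fun u _ => integrable_finsetSum _ fun v _ => hc u v]
    exact Finset.sum_congr rfl fun u _ => integral_finsetSum _ fun v _ => hc u v
  have hzero : ∀ u v, (φ u : (Fin k → ℤ) ⧸ Q) ≠ φ v →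
      ∫ α in _root_.box k, (H α : ℂ) * chr (φ u - φ v) α = 0 := by
    intro u v huv
    refine hH.integral_mul_chr_eq_zero fun hmem => huv ?_
    rw [eq_comm, QuotientAddGroup.eq, neg_add_eq_sub]
    exact hmem
  have : ((∫ α in _root_.box k, ‖∑ u ∈ S, chr (φ u) α‖ ^ 2 * H α : ℝ) : ℂ) =
      ((∑ l ∈ T, ∫ α in _root_.box k,
        ‖∑ u ∈ S with (φ u : (Fin k → ℤ) ⧸ Q) = l, chr (φ u) α‖ ^ 2 * H α : ℝ) : ℂ) := by
    rw [Complex.ofReal_sum, hexp]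
    simp only [hexp]
    rw [← Finset.sum_fiberwise_of_maps_to hT]
    refine Finset.sum_congr rfl fun l _ => Finset.sum_congr rfl fun u hu => ?_
    rw [Finset.sum_filter]
    refine Finset.sum_congr rfl fun v _ => ?_
    split_ifs with hv
    · rfl
    · refine hzero u v fun h => hv ?_
      rw [← h, (Finset.mem_filter.1 hu).2]
  exact_mod_cast this

/-- Splitting a mean value into classes at the cost of the number of classes that can share a
coset of the frequency group of the weight. -/
theorem integral_norm_sq_le_card_mul_sum_classes {ι κ : Type*} [DecidableEq κ]
    {Q : AddSubgroup (Fin k → ℤ)}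
    {H : (Fin k → ℝ) → ℝ} (hH : IsTrigSum Q fun α => (H α : ℂ)) (hHc : Continuous H)
    (hH0 : ∀ α, 0 ≤ H α)
    (S : Finset ι) (φ : ι → Fin k → ℤ) (cl : ι → κ) (n : ℕ)
    (hn : ∀ u ∈ S, ((S.filter fun v => φ u - φ v ∈ Q).image cl).card ≤ n) :
    ∫ α in _root_.box k, ‖∑ u ∈ S, chr (φ u) α‖ ^ 2 * H α ≤
      n * ∑ c ∈ S.image cl, ∫ α in _root_.box k, ‖∑ u ∈ S with cl u = c, chr (φ u) α‖ ^ 2 * H α := by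
  set T : Finset ((Fin k → ℤ) ⧸ Q) := S.image fun u => (φ u : (Fin k → ℤ) ⧸ Q)
  have hT : ∀ u ∈ S, (φ u : (Fin k → ℤ) ⧸ Q) ∈ T := fun u hu => Finset.mem_image_of_mem _ hu
  have hci : ∀ P : Finset ι,
      IntegrableOn (fun α => ‖∑ u ∈ P, chr (φ u) α‖ ^ 2 * H α) (_root_.box k) := fun P =>
    integrableOn_box (((continuous_sum_chr P φ).norm.pow 2).mul hHc)
  rw [integral_norm_sq_eq_sum_fibers hH S φ T hT]
  have hfib : ∀ l ∈ T, ∫ α in _root_.box k,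
        ‖∑ u ∈ S with (φ u : (Fin k → ℤ) ⧸ Q) = l, chr (φ u) α‖ ^ 2 * H α ≤
      n * ∑ c ∈ S.image cl, ∫ α in _root_.box k,
        ‖∑ u ∈ (S.filter fun u => cl u = c) with (φ u : (Fin k → ℤ) ⧸ Q) = l,
          chr (φ u) α‖ ^ 2 * H α := by
    intro l hl
    obtain ⟨w, hw, rfl⟩ := Finset.mem_image.1 hl
    rw [← integral_finsetSum _ fun c _ => hci _, ← integral_const_mul]
    refine integral_mono (hci _) ((integrable_finsetSum _ fun c _ => hci _).const_mul _)
      fun α => ?_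
    dsimp only
    rw [← Finset.sum_mul, ← mul_assoc]
    refine mul_le_mul_of_nonneg_right ?_ (hH0 α)
    set P := S.filter fun u => (φ u : (Fin k → ℤ) ⧸ Q) = φ w with hP
    have hPeq : P = S.filter fun v => φ w - φ v ∈ Q := by
      refine Finset.filter_congr fun v _ => ?_
      rw [QuotientAddGroup.eq, neg_add_eq_sub]
    rw [← Finset.sum_fiberwise_of_maps_to
      (fun u hu => Finset.mem_image_of_mem cl hu : ∀ u ∈ P, cl u ∈ P.image cl)]
    have hcard : ((P.image cl).card : ℝ) ≤ n := by
      rw [hPeq]; exact_mod_cast hn w hw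
    calc ‖∑ c ∈ P.image cl, ∑ u ∈ P with cl u = c, chr (φ u) α‖ ^ 2
        ≤ (∑ c ∈ P.image cl, ‖∑ u ∈ P with cl u = c, chr (φ u) α‖) ^ 2 :=
          pow_le_pow_left₀ (norm_nonneg _) (norm_sum_le _ _) 2
      _ ≤ (P.image cl).card * ∑ c ∈ P.image cl, ‖∑ u ∈ P with cl u = c, chr (φ u) α‖ ^ 2 :=
          sq_sum_le_card_mul_sum_sq
      _ ≤ n * ∑ c ∈ S.image cl, ‖∑ u ∈ P with cl u = c, chr (φ u) α‖ ^ 2 := by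
          gcongr
          exact Finset.filter_subset _ _
      _ = _ := by
          simp only [hP, Finset.filter_filter, and_comm]
  calc _ ≤ ∑ l ∈ T, n * ∑ c ∈ S.image cl, ∫ α in _root_.box k,
        ‖∑ u ∈ (S.filter fun u => cl u = c) with (φ u : (Fin k → ℤ) ⧸ Q) = l,
          chr (φ u) α‖ ^ 2 * H α := Finset.sum_le_sum hfib
    _ = _ := by
      rw [← Finset.mul_sum, Finset.sum_comm]
      congr 1
      refine Finset.sum_congr rfl fun c _ => ?_
      rw [integral_norm_sq_eq_sum_fibers hH _ φ T fun u hu => hT u (Finset.mem_filter.1 hu).1]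

/-- Covering inequality: a weight that is a sum of characters has non-negative correlations. -/
theorem norm_integral_mul_sum_chr_le {ι κ : Type*} {G : (Fin k → ℝ) → ℂ} (hG : IsTrigSum ⊤ G)
    (χ : ι → Fin k → ℤ) (V : Finset ι) (L : Finset κ) (W : κ → Finset ι)
    (hV : ∀ v ∈ V, ∃ l ∈ L, v ∈ W l) :
    ‖∫ α in _root_.box k, G α * ∑ v ∈ V, chr (χ v) α‖ ≤
      ∑ l ∈ L, ∫ α in _root_.box k, ‖G α‖ * ‖∑ v ∈ W l, chr (χ v) α‖ := by
  have hnn : ∀ v, ∃ c : ℝ, 0 ≤ c ∧ ∫ α in _root_.box k, G α * chr (χ v) α = c := fun v =>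
    (hG.mul (IsTrigSum.chr (AddSubgroup.mem_top (χ v)))).integral_eq
  choose c hc0 hc using hnn
  have hsum : ∀ P : Finset ι, ∫ α in _root_.box k, G α * ∑ v ∈ P, chr (χ v) α =
      ((∑ v ∈ P, c v : ℝ) : ℂ) := by
    intro P
    simp only [Finset.mul_sum]
    have hi : ∀ v, IntegrableOn (fun α => G α * chr (χ v) α) (_root_.box k) := fun v =>
      integrableOn_box (hG.continuous.mul (continuous_chr _))
    rw [integral_finsetSum _ fun v _ => hi v]
    simp only [hc, Complex.ofReal_sum]
  rw [hsum, Complex.norm_real, Real.norm_of_nonneg (Finset.sum_nonneg fun v _ => hc0 v)]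
  have h1 : ∑ v ∈ V, c v ≤ ∑ l ∈ L, ∑ v ∈ W l, c v := by
    calc ∑ v ∈ V, c v ≤ ∑ v ∈ V, ∑ l ∈ L, if v ∈ W l then c v else 0 := by
          refine Finset.sum_le_sum fun v hv => ?_
          obtain ⟨l, hl, hvl⟩ := hV v hv
          calc c v = if v ∈ W l then c v else 0 := (if_pos hvl).symm
            _ ≤ _ := Finset.single_le_sum (f := fun l => if v ∈ W l then c v else 0)
              (fun l _ => by split_ifs <;> simp [hc0]) hl
      _ = ∑ l ∈ L, ∑ v ∈ V, if v ∈ W l then c v else 0 := Finset.sum_comm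
      _ ≤ ∑ l ∈ L, ∑ v ∈ W l, c v := by
          refine Finset.sum_le_sum fun l _ => ?_
          rw [← Finset.sum_filter]
          exact Finset.sum_le_sum_of_subset_of_nonneg (fun v hv => (Finset.mem_filter.1 hv).2)
            fun v _ _ => hc0 v
  refine h1.trans (Finset.sum_le_sum fun l _ => ?_)
  calc ∑ v ∈ W l, c v = ‖∫ α in _root_.box k, G α * ∑ v ∈ W l, chr (χ v) α‖ := by
        rw [hsum, Complex.norm_real, Real.norm_of_nonneg (Finset.sum_nonneg fun v _ => hc0 v)]
    _ ≤ ∫ α in _root_.box k, ‖G α * ∑ v ∈ W l, chr (χ v) α‖ := norm_integral_le_integral_norm _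
    _ = _ := by simp only [norm_mul]

end MeanValues

/-! ### Comparison of moments -/

section Majorant

variable {k : ℕ}

/-- `G` is obtained from the sum of characters `F` by adding further characters. -/
def TrigLE (F G : (Fin k → ℝ) → ℂ) : Prop :=
  IsTrigSum ⊤ F ∧ ∃ D, IsTrigSum ⊤ D ∧ ∀ α, G α = F α + D α

namespace TrigLE

variable {F G F' G' : (Fin k → ℝ) → ℂ}

lemma right (h : TrigLE F G) : IsTrigSum ⊤ G := by
  obtain ⟨hF, D, hD, h⟩ := h
  rw [funext h]
  exact hF.add hD

lemma mul (h : TrigLE F G) (h' : TrigLE F' G') :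
    TrigLE (fun α => F α * F' α) (fun α => G α * G' α) := by
  obtain ⟨D, hD, hG⟩ := h.2
  obtain ⟨D', hD', hG'⟩ := h'.2
  refine ⟨h.1.mul h'.1, _, (hD.mul h'.right).add (h.1.mul hD'), fun α => ?_⟩
  dsimp only
  rw [hG, hG']
  ring

lemma pow (h : TrigLE F G) (n : ℕ) : TrigLE (fun α => F α ^ n) (fun α => G α ^ n) := by
  induction n with
  | zero => simpa using ⟨IsTrigSum.one, fun _ => 0, IsTrigSum.zero, by simp⟩
  | succ n ih => simpa only [pow_succ] using ih.mul h

lemma star (h : TrigLE F G) : TrigLE (fun α => star (F α)) (fun α => star (G α)) := by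
  obtain ⟨D, hD, hG⟩ := h.2
  exact ⟨h.1.star, _, hD.star, fun α => by simp only [hG, star_add]⟩

lemma ofReal_norm_pow (z : ℂ) (n : ℕ) : ((‖z‖ ^ (2 * n) : ℝ) : ℂ) = z ^ n * Star.star z ^ n := by
  rw [← mul_pow, Complex.star_def, Complex.mul_conj, Complex.normSq_eq_norm_sq, ← Complex.ofReal_pow,
    pow_mul]

theorem integral_norm_pow_le (h : TrigLE F G) (n : ℕ) :
    ∫ α in _root_.box k, ‖F α‖ ^ (2 * n) ≤ ∫ α in _root_.box k, ‖G α‖ ^ (2 * n) := by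
  obtain ⟨hF, D, hD, hG⟩ := (h.pow n).mul (h.star.pow n)
  obtain ⟨c, hc, hcD⟩ := hD.integral_eq
  have : ((∫ α in _root_.box k, ‖G α‖ ^ (2 * n) : ℝ) : ℂ) =
      (((∫ α in _root_.box k, ‖F α‖ ^ (2 * n)) + c : ℝ) : ℂ) := by
    rw [Complex.ofReal_add, ← integral_complex_ofReal, ← integral_complex_ofReal, ← hcD]
    simp only [ofReal_norm_pow]
    rw [integral_congr_ae (Eventually.of_forall hG)]
    exact integral_add (integrableOn_box hF.continuous) (integrableOn_box hD.continuous)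
  have := Complex.ofReal_injective this
  linarith

end TrigLE

lemma IsTrigSum.norm_pow {Q : AddSubgroup (Fin k → ℤ)} {F : (Fin k → ℝ) → ℂ}
    (h : IsTrigSum Q fun α => ((‖F α‖ ^ 2 : ℝ) : ℂ)) (n : ℕ) :
    IsTrigSum Q fun α => ((‖F α‖ ^ (2 * n) : ℝ) : ℂ) := by
  simpa only [pow_mul, Complex.ofReal_pow] using h.pow n

end Majorant

/-! ### The exponential sums as sums of characters -/

section ExpSums

variable {k p r : ℕ}

/-- The frequency vector `(x, x², …, x^k)`. -/
def vec (k : ℕ) (x : ℤ) : Fin k → ℤ := fun j => x ^ ((j : ℕ) + 1)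

/-- The integers in `[1, X]` congruent to `ξ` modulo `p^c`. -/
def progr (p : ℕ) (X : ℝ) (c : ℕ) (ξ : ℤ) : Finset ℤ :=
  (Finset.Icc (1 : ℤ) ⌊X⌋).filter fun x => Int.ModEq ((p : ℤ) ^ c) x ξ

/-- The exponential sum attached to a finite set of integral tuples. -/
def tupleSum (k : ℕ) {r : ℕ} (S : Finset (Fin r → ℤ)) (α : Fin k → ℝ) : ℂ :=
  ∑ u ∈ S, chr (∑ i, vec k (u i)) α

/-- The `r`-tuples from `[1, X]` satisfying `P`. -/
def tuples (r : ℕ) (X : ℝ) (P : (Fin r → ℤ) → Prop) : Finset (Fin r → ℤ) :=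
  (Fintype.piFinset fun _ => Finset.Icc (1 : ℤ) ⌊X⌋).filter P

lemma mem_tuples {X : ℝ} {P : (Fin r → ℤ) → Prop} {u : Fin r → ℤ} :
    u ∈ tuples r X P ↔ (∀ i, u i ∈ Finset.Icc (1 : ℤ) ⌊X⌋) ∧ P u := by
  rw [tuples, Finset.mem_filter, Fintype.mem_piFinset]

/-- Tuples congruent to `ξ` modulo `p^c` and pairwise distinct modulo `p^{c+1}`. -/
def Conditioned (p c : ℕ) (ξ : ℤ) (u : Fin r → ℤ) : Prop :=
  (∀ i, (p : ℤ) ^ c ∣ u i - ξ) ∧ ∀ i j, i ≠ j → ¬ (p : ℤ) ^ (c + 1) ∣ u i - u j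

lemma fexp_eq (X : ℝ) (c : ℕ) (ξ : ℤ) (α : Fin k → ℝ) :
    fexp k p X c ξ α = ∑ x ∈ progr p X c ξ, chr (vec k x) α := by
  unfold fexp chr progr vec
  simp only [Int.cast_pow]

lemma prod_sum_chr (B : Fin r → Finset ℤ) (α : Fin k → ℝ) :
    ∏ i, ∑ x ∈ B i, chr (vec k x) α = tupleSum k (Fintype.piFinset B) α := by
  unfold tupleSum
  rw [Finset.prod_univ_sum]
  simp only [chr_sum]

lemma prod_fexp_eq (X : ℝ) (c : ℕ) (v : Fin r → ℤ) (α : Fin k → ℝ) :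
    ∏ i, fexp k p X c (v i) α = tupleSum k (Fintype.piFinset fun i => progr p X c (v i)) α := by
  simp only [fexp_eq, prod_sum_chr]

/-- The representative of `x` modulo `q` in `[1, q]`. -/
def rep (q x : ℤ) : ℤ := (x - 1) % q + 1

lemma rep_mem {q : ℤ} (hq : 0 < q) (x : ℤ) : 1 ≤ rep q x ∧ rep q x ≤ q := by
  unfold rep
  have h1 := Int.emod_nonneg (x - 1) hq.ne'
  have h2 := Int.emod_lt_of_pos (x - 1) hq
  omega

lemma dvd_sub_rep (q x : ℤ) : q ∣ x - rep q x := by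
  unfold rep
  have := Int.dvd_self_sub_emod (x := x - 1) (m := q)
  rwa [show x - ((x - 1) % q + 1) = x - 1 - (x - 1) % q by ring]

lemma eq_of_dvd_sub {q x y : ℤ} (hx : 1 ≤ x ∧ x ≤ q) (hy : 1 ≤ y ∧ y ≤ q)
    (h : q ∣ x - y) : x = y := by
  have := Int.eq_zero_of_abs_lt_dvd h (by rw [abs_lt]; omega)
  omega

lemma rep_eq_iff {q x y : ℤ} (hy : 1 ≤ y ∧ y ≤ q) : rep q x = y ↔ q ∣ x - y := by
  have hq : 0 < q := by omega
  constructor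
  · rintro rfl
    exact dvd_sub_rep q x
  · intro h
    refine eq_of_dvd_sub (rep_mem hq x) hy ?_
    have := dvd_sub h (dvd_sub_rep q x)
    rwa [show x - y - (x - rep q x) = rep q x - y by ring] at this

lemma mem_progr {X : ℝ} {c : ℕ} {ξ x : ℤ} :
    x ∈ progr p X c ξ ↔ x ∈ Finset.Icc 1 ⌊X⌋ ∧ (p : ℤ) ^ c ∣ x - ξ := by
  unfold progr
  rw [Finset.mem_filter, Int.modEq_comm, Int.modEq_iff_dvd]

lemma finsum_prod_fexp_eq (X : ℝ) (c : ℕ) (T : Set (Fin r → ℤ))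
    (hT : ∀ v ∈ T, ∀ i, 1 ≤ v i ∧ v i ≤ (p : ℤ) ^ c) (α : Fin k → ℝ) :
    ∑ᶠ v ∈ T, ∏ i, fexp k p X c (v i) α =
      tupleSum k (tuples r X fun u => (fun i => rep ((p : ℤ) ^ c) (u i)) ∈ T) α := by
  have hfin : T.Finite := by
    refine (Fintype.piFinset fun _ : Fin r => Finset.Icc (1 : ℤ) ((p : ℤ) ^ c)).finite_toSet.subset ?_
    intro v hv
    rw [Finset.mem_coe, Fintype.mem_piFinset]
    exact fun i => Finset.mem_Icc.2 (hT v hv i)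
  rw [finsum_mem_eq_finite_toFinset_sum _ hfin]
  unfold tupleSum tuples
  have hmaps : ∀ u ∈ (Fintype.piFinset fun _ : Fin r => Finset.Icc (1 : ℤ) ⌊X⌋).filter
      (fun u => (fun i => rep ((p : ℤ) ^ c) (u i)) ∈ T),
      (fun i => rep ((p : ℤ) ^ c) (u i)) ∈ hfin.toFinset :=
    fun u hu => hfin.mem_toFinset.2 (Finset.mem_filter.1 hu).2
  rw [← Finset.sum_fiberwise_of_maps_to hmaps]
  refine Finset.sum_congr rfl fun v hv => ?_
  rw [hfin.mem_toFinset] at hv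
  rw [prod_fexp_eq]
  unfold tupleSum
  refine Finset.sum_congr ?_ fun _ _ => rfl
  ext u
  simp only [Fintype.mem_piFinset, mem_progr, Finset.mem_filter]
  constructor
  · intro h
    have : (fun i => rep ((p : ℤ) ^ c) (u i)) = v :=
      funext fun i => (rep_eq_iff (hT v hv i)).2 (h i).2
    exact ⟨⟨fun i => (h i).1, this ▸ hv⟩, this⟩
  · rintro ⟨⟨h1, -⟩, h2⟩ i
    exact ⟨h1 i, (rep_eq_iff (hT v hv i)).1 (congrFun h2 i)⟩

lemma dvd_rep_sub_iff {q m x y : ℤ} (h : m ∣ q) : m ∣ rep q x - y ↔ m ∣ x - y := by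
  rw [← dvd_add_right (h.trans (dvd_sub_rep q x)), show x - rep q x + (rep q x - y) = x - y by ring]

lemma dvd_rep_sub_rep_iff {q m x y : ℤ} (h : m ∣ q) : m ∣ rep q x - rep q y ↔ m ∣ x - y := by
  rw [dvd_rep_sub_iff h, dvd_sub_comm, dvd_rep_sub_iff h, dvd_sub_comm]

lemma rep_mem_XiSet_iff (hp : 0 < p) (c : ℕ) (ξ : ℤ) (u : Fin r → ℤ) :
    (fun i => rep ((p : ℤ) ^ (c + 1)) (u i)) ∈ XiSet p r c ξ ↔ Conditioned p c ξ u := by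
  have hq : 0 < (p : ℤ) ^ (c + 1) := by positivity
  unfold XiSet Conditioned
  rw [Set.mem_ofPred_eq]
  have h1 : ∀ i, Int.ModEq ((p : ℤ) ^ c) (rep ((p : ℤ) ^ (c + 1)) (u i)) ξ ↔
      (p : ℤ) ^ c ∣ u i - ξ := fun i => by
    rw [Int.modEq_comm, Int.modEq_iff_dvd, dvd_rep_sub_iff (pow_dvd_pow _ (Nat.le_succ c))]
  have h2 : (Function.Injective fun i => ((rep ((p : ℤ) ^ (c + 1)) (u i) : ℤ) : ZMod (p ^ (c + 1)))) ↔
      ∀ i j, i ≠ j → ¬ (p : ℤ) ^ (c + 1) ∣ u i - u j := by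
    have h3 : ∀ i j, ((rep ((p : ℤ) ^ (c + 1)) (u i) : ℤ) : ZMod (p ^ (c + 1))) =
        ((rep ((p : ℤ) ^ (c + 1)) (u j) : ℤ) : ZMod (p ^ (c + 1))) ↔
        (p : ℤ) ^ (c + 1) ∣ u i - u j := fun i j => by
      rw [eq_comm, ZMod.intCast_eq_intCast_iff_dvd_sub, Nat.cast_pow, dvd_rep_sub_rep_iff dvd_rfl]
    constructor
    · intro h i j hij hd
      exact hij (h ((h3 i j).2 hd))
    · intro h i j hij
      by_contra hne
      exact h i j hne ((h3 i j).1 hij)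
  simp only [h1, h2]
  exact ⟨fun h => h.2, fun h => ⟨fun i => rep_mem hq _, h⟩⟩

lemma Fexp_eq (hp : 0 < p) (X : ℝ) (c : ℕ) (ξ : ℤ) (α : Fin k → ℝ) :
    Fexp k p r X c ξ α = tupleSum k (tuples r X (Conditioned p c ξ)) α := by
  unfold Fexp
  rw [finsum_prod_fexp_eq X (c + 1) _ (fun v hv => hv.1)]
  simp only [rep_mem_XiSet_iff hp]

lemma Fexp_eq_of_not_dvd (hp : 0 < p) (X : ℝ) {c : ℕ} (hc : 1 ≤ c) {ξ η : ℤ}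
    (hξη : ¬ (p : ℤ) ∣ ξ - η) (α : Fin k → ℝ) :
    Fexp k p r X c ξ α =
      tupleSum k (tuples r X fun u => Conditioned p c ξ u ∧ ∀ i, ¬ (p : ℤ) ∣ u i - η) α := by
  rw [Fexp_eq hp]
  congr 2
  ext u
  refine ⟨fun h => ⟨h, fun i hd => hξη ?_⟩, fun h => h.1⟩
  have := dvd_sub hd ((dvd_pow_self (p : ℤ) (by omega : c ≠ 0)).trans (h.1 i))
  rwa [show u i - η - (u i - ξ) = ξ - η by ring] at this

lemma Ftilde_eq (hp : 0 < p) (X : ℝ) (ξ η : ℤ) (α : Fin k → ℝ) :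
    Ftilde k p r X η α =
      tupleSum k (tuples r X fun u => Conditioned p 0 ξ u ∧ ∀ i, ¬ (p : ℤ) ∣ u i - η) α := by
  unfold Ftilde
  have h := finsum_prod_fexp_eq (k := k) X 1 (XiTilde p r η) (fun v hv => by simpa using hv.1.1) α
  rw [h]
  congr 2
  ext u
  unfold XiTilde
  rw [Set.mem_ofPred_eq]
  have h1 := rep_mem_XiSet_iff hp 0 0 u
  rw [zero_add] at h1
  rw [h1]
  refine and_congr ?_ (forall_congr' fun i => not_congr ?_)
  · simp [Conditioned]
  · rw [Int.modEq_comm, Int.modEq_iff_dvd, dvd_rep_sub_iff (by simp)]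

lemma isTrigSum_sum_chr {ι : Type*} (S : Finset ι) (φ : ι → Fin k → ℤ) :
    IsTrigSum ⊤ fun α => ∑ u ∈ S, chr (φ u) α :=
  IsTrigSum.sum S fun _ _ => IsTrigSum.chr (AddSubgroup.mem_top _)

lemma continuous_tupleSum (S : Finset (Fin r → ℤ)) : Continuous (tupleSum k S) :=
  continuous_sum_chr S _

lemma continuous_fexp (X : ℝ) (c : ℕ) (ξ : ℤ) : Continuous (fexp k p X c ξ) := by
  rw [funext (fexp_eq X c ξ)]
  exact continuous_sum_chr _ _

lemma continuous_Fexp (hp : 0 < p) (X : ℝ) (c : ℕ) (ξ : ℤ) : Continuous (Fexp k p r X c ξ) := by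
  rw [funext (Fexp_eq hp X c ξ)]
  exact continuous_tupleSum _

lemma tupleSum_le {S T : Finset (Fin r → ℤ)} (h : S ⊆ T) :
    TrigLE (tupleSum k S) (tupleSum k T) :=
  ⟨isTrigSum_sum_chr _ _, tupleSum k (T \ S), isTrigSum_sum_chr _ _, fun α => by
    unfold tupleSum
    rw [add_comm, Finset.sum_sdiff h]⟩

/-- Dropping the conditioning increases moments. -/
lemma integral_norm_Fexp_pow_le (hp : 0 < p) (X : ℝ) (c : ℕ) (ξ : ℤ) (n : ℕ) :
    ∫ α in _root_.box k, ‖Fexp k p r X c ξ α‖ ^ (2 * n) ≤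
      ∫ α in _root_.box k, ‖fexp k p X c ξ α‖ ^ (2 * (r * n)) := by
  have h := (tupleSum_le (k := k) (S := tuples r X (Conditioned p c ξ))
    (T := Fintype.piFinset fun _ => progr p X c ξ) fun u hu => ?_).integral_norm_pow_le n
  · simp only [← Fexp_eq hp, ← prod_fexp_eq, Finset.prod_const, Finset.card_univ, Fintype.card_fin,
      norm_pow, ← pow_mul] at h
    simpa only [mul_left_comm] using h
  · rw [mem_tuples] at hu
    rw [Fintype.mem_piFinset]
    exact fun i => mem_progr.2 ⟨hu.1 i, hu.2.1 i⟩

end ExpSums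

/-! ### Translation and dilation -/

section Translation

variable {k p r : ℕ}

/-- The linear form in the power sums that expresses the power sum of degree `j` after translation
by `η`. -/
def shiftForm (η : ℤ) (j : ℕ) : (Fin k → ℤ) →+ ℤ where
  toFun n := ∑ i : Fin k, ((Polynomial.X - Polynomial.C η) ^ j).coeff ((i : ℕ) + 1) * n i
  map_zero' := by simp
  map_add' m n := by simp only [Pi.add_apply, mul_add, Finset.sum_add_distrib]

lemma shiftForm_vec (η : ℤ) {j : ℕ} (hj : j ≤ k) (x : ℤ) :
    shiftForm η j (vec k x) = (x - η) ^ j - (-η) ^ j := by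
  have hdeg : ((Polynomial.X - Polynomial.C η) ^ j).natDegree < k + 1 := by
    rw [Polynomial.natDegree_pow, Polynomial.natDegree_X_sub_C]
    omega
  have h1 := Polynomial.eval_eq_sum_range' hdeg x
  rw [Finset.sum_range_succ', Finset.sum_range, Polynomial.coeff_zero_eq_eval_zero] at h1
  simp only [Polynomial.eval_pow, Polynomial.eval_sub, Polynomial.eval_X, Polynomial.eval_C,
    zero_sub, pow_zero, mul_one] at h1
  rw [h1, add_sub_cancel_right]
  rfl

lemma shiftForm_sum_vec (η : ℤ) {j : ℕ} (hj : j ≤ k) (u : Fin r → ℤ) :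
    shiftForm η j (∑ i, vec k (u i)) = ∑ i, (u i - η) ^ j - r * (-η) ^ j := by
  rw [map_sum]
  simp only [shiftForm_vec η hj, Finset.sum_sub_distrib, Finset.sum_const, Finset.card_univ,
    Fintype.card_fin, nsmul_eq_mul]

/-- The frequencies whose power sums, translated by `η`, satisfy the congruences modulo
`p^{jb}`. -/
def congGroup (k p b : ℕ) (η : ℤ) : AddSubgroup (Fin k → ℤ) where
  carrier := {n | ∀ j ∈ Finset.Icc 1 k, (p : ℤ) ^ (j * b) ∣ shiftForm η j n}
  zero_mem' := fun j _ => by simp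
  add_mem' := fun hm hn j hj => by
    rw [map_add]
    exact dvd_add (hm j hj) (hn j hj)
  neg_mem' := fun hn j hj => by
    rw [map_neg]
    exact (dvd_neg).2 (hn j hj)

lemma sub_mem_congGroup_iff {b : ℕ} {η : ℤ} {u v : Fin r → ℤ} :
    ∑ i, vec k (u i) - ∑ i, vec k (v i) ∈ congGroup k p b η ↔
      ∀ j ∈ Finset.Icc 1 k, (p : ℤ) ^ (j * b) ∣ ∑ i, (u i - η) ^ j - ∑ i, (v i - η) ^ j := by
  change (∀ j ∈ Finset.Icc 1 k, _) ↔ _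
  refine forall₂_congr fun j hj => ?_
  have hjk := (Finset.mem_Icc.1 hj).2
  rw [map_sub, shiftForm_sum_vec η hjk, shiftForm_sum_vec η hjk, sub_sub_sub_cancel_right]

lemma isTrigSum_norm_sq_Fexp (hp : 0 < p) (X : ℝ) (b : ℕ) (η : ℤ) :
    IsTrigSum (congGroup k p b η) fun α => ((‖Fexp k p r X b η α‖ ^ 2 : ℝ) : ℂ) := by
  simp only [Fexp_eq hp, tupleSum, ofReal_norm_sq_sum_chr]
  refine IsTrigSum.sum _ fun u hu => IsTrigSum.sum _ fun v hv => IsTrigSum.chr ?_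
  rw [sub_mem_congGroup_iff]
  intro j _
  have : ∀ w ∈ tuples r X (Conditioned p b η), (p : ℤ) ^ (j * b) ∣ ∑ i, (w i - η) ^ j := by
    intro w hw
    refine Finset.dvd_sum fun i _ => ?_
    rw [mul_comm, pow_mul]
    exact pow_dvd_pow_of_dvd ((mem_tuples.1 hw).2.1 i) j
  exact dvd_sub (this u hu) (this v hv)

lemma integral_norm_sq_sum_chr {ι : Type*} (S : Finset ι) (φ : ι → Fin k → ℤ) :
    ∫ α in _root_.box k, ‖∑ u ∈ S, chr (φ u) α‖ ^ 2 =
      ((S ×ˢ S).filter fun x => φ x.1 = φ x.2).card := by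
  have : ((∫ α in _root_.box k, ‖∑ u ∈ S, chr (φ u) α‖ ^ 2 : ℝ) : ℂ) =
      ((((S ×ˢ S).filter fun x => φ x.1 = φ x.2).card : ℝ) : ℂ) := by
    rw [← integral_complex_ofReal]
    simp only [ofReal_norm_sq_sum_chr]
    have hc : ∀ u v, IntegrableOn (fun α => chr (φ u - φ v) α) (_root_.box k) :=
      fun u v => integrableOn_box (continuous_chr _)
    rw [integral_finsetSum _ fun u _ => integrable_finsetSum _ fun v _ => hc u v]
    simp only [integral_finsetSum _ fun v _ => hc _ v, integral_chr, sub_eq_zero]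
    rw [← Finset.sum_product', Finset.sum_ite, Finset.sum_const_zero, add_zero, Finset.sum_const]
    simp
  exact_mod_cast this

lemma finite_Jcount_set (s k : ℕ) (Y : ℝ) : {xy : (Fin s → ℤ) × (Fin s → ℤ) |
    (∀ i, 1 ≤ xy.1 i ∧ (xy.1 i : ℝ) ≤ Y) ∧
    (∀ i, 1 ≤ xy.2 i ∧ (xy.2 i : ℝ) ≤ Y) ∧
    ∀ j ∈ Finset.Icc 1 k, ∑ i, ((xy.1 i) ^ j - (xy.2 i) ^ j) = 0}.Finite := by
  have hfin : (Fintype.piFinset fun _ : Fin s => Finset.Icc (1 : ℤ) ⌊Y⌋ : Set (Fin s → ℤ)).Finite :=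
    Finset.finite_toSet _
  refine (hfin.prod hfin).subset ?_
  rintro ⟨x, y⟩ ⟨hx, hy, -⟩
  refine ⟨?_, ?_⟩ <;> rw [Finset.mem_coe, Fintype.mem_piFinset] <;> intro i <;>
    rw [Finset.mem_Icc, Int.le_floor]
  exacts [hx i, hy i]

theorem integral_norm_fexp_pow_le (hp : 0 < p) {X Y : ℝ} {c : ℕ} {η : ℤ} (h1 : 1 ≤ η)
    (hη : η ≤ (p : ℤ) ^ c) (n : ℕ) (hY : X / (p : ℝ) ^ c + 1 ≤ Y) :
    ∫ α in _root_.box k, ‖fexp k p X c η α‖ ^ (2 * n) ≤ Jcount n k Y := by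
  set q : ℤ := (p : ℤ) ^ c with hqdef
  have hq : 0 < q := by positivity
  have hqR : ((q : ℤ) : ℝ) = (p : ℝ) ^ c := by rw [hqdef]; push_cast; rfl
  set S := Fintype.piFinset fun _ : Fin n => progr p X c η with hS
  have hmem : ∀ u ∈ S, ∀ i, u i = q * ((u i - η) / q) + η ∧ 0 ≤ (u i - η) / q ∧
      (((u i - η) / q + 1 : ℤ) : ℝ) ≤ Y := by
    intro u hu i
    obtain ⟨hI, hd⟩ := mem_progr.1 (Fintype.mem_piFinset.1 hu i)
    rw [Finset.mem_Icc, Int.le_floor] at hI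
    have e : q * ((u i - η) / q) = u i - η := Int.mul_ediv_cancel' hd
    refine ⟨by rw [e]; ring, ?_, ?_⟩
    · by_contra hneg
      push Not at hneg
      nlinarith
    · refine le_trans ?_ hY
      push_cast
      rw [add_le_add_iff_right, le_div_iff₀ (by positivity), ← hqR]
      have e' : (q : ℝ) * (((u i - η) / q : ℤ) : ℝ) = u i - η := by exact_mod_cast e
      have h1' : (1 : ℝ) ≤ η := by exact_mod_cast h1
      have := hI.2
      linarith
  have hintegral : ∫ α in _root_.box k, ‖fexp k p X c η α‖ ^ (2 * n) =
      ((S ×ˢ S).filter fun x => ∑ i, vec k (x.1 i) = ∑ i, vec k (x.2 i)).card := by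
    rw [← integral_norm_sq_sum_chr S fun u => ∑ i, vec k (u i)]
    refine integral_congr_ae (Eventually.of_forall fun α => ?_)
    have : fexp k p X c η α ^ n = ∑ u ∈ S, chr (∑ i, vec k (u i)) α := by
      have := prod_fexp_eq (k := k) (p := p) X c (fun _ : Fin n => η) α
      rwa [Finset.prod_const, Finset.card_univ, Fintype.card_fin] at this
    dsimp only
    rw [← this, norm_pow, ← pow_mul, mul_comm]
  rw [hintegral]
  unfold Jcount
  rw [← Set.ncard_coe_finset, Nat.cast_le]
  refine Set.ncard_le_ncard_of_injOn
    (fun x : (Fin n → ℤ) × (Fin n → ℤ) =>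
      (fun i => (x.1 i - η) / q + 1, fun i => (x.2 i - η) / q + 1)) ?_ ?_
    (finite_Jcount_set n k Y)
  · rintro ⟨u, v⟩ huv
    rw [Finset.mem_coe, Finset.mem_filter, Finset.mem_product] at huv
    obtain ⟨⟨hu, hv⟩, he⟩ := huv
    refine ⟨fun i => ⟨?_, (hmem u hu i).2.2⟩, fun i => ⟨?_, (hmem v hv i).2.2⟩, ?_⟩
    · have := (hmem u hu i).2.1
      dsimp only
      omega
    · have := (hmem v hv i).2.1
      dsimp only
      omega
    · have hy : ∑ i, vec k ((u i - η) / q) = ∑ i, vec k ((v i - η) / q) := by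
        ext j
        have hj : (j : ℕ) + 1 ≤ k := j.2
        have h2 := congrArg (shiftForm η ((j : ℕ) + 1)) he
        rw [shiftForm_sum_vec η hj, shiftForm_sum_vec η hj, sub_left_inj] at h2
        have h3 : ∀ w ∈ S, ∑ i, (w i - η) ^ ((j : ℕ) + 1) =
            q ^ ((j : ℕ) + 1) * ∑ i, ((w i - η) / q) ^ ((j : ℕ) + 1) := by
          intro w hw
          rw [Finset.mul_sum]
          refine Finset.sum_congr rfl fun i _ => ?_
          rw [← mul_pow]
          congr 1
          linarith [(hmem w hw i).1]
        rw [h3 u hu, h3 v hv] at h2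
        have h4 := mul_left_cancel₀ (by positivity) h2
        simpa [Finset.sum_apply, vec] using h4
      intro j hj
      have hjk := (Finset.mem_Icc.1 hj).2
      have h2 := congrArg (shiftForm (-1) j) hy
      rw [shiftForm_sum_vec _ hjk, shiftForm_sum_vec _ hjk, sub_left_inj] at h2
      simp only [sub_neg_eq_add] at h2
      rw [Finset.sum_sub_distrib, sub_eq_zero]
      exact h2
  · rintro ⟨u, v⟩ huv ⟨u', v'⟩ huv' he
    rw [Finset.mem_coe, Finset.mem_filter, Finset.mem_product] at huv huv'
    have e : ∀ w ∈ S, ∀ w' ∈ S, (fun i => (w i - η) / q + 1) = (fun i => (w' i - η) / q + 1) →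
        w = w' := by
      intro w hw w' hw' hww
      ext i
      have := congrFun hww i
      rw [(hmem w hw i).1, (hmem w' hw' i).1, add_right_cancel this]
    rw [Prod.mk.injEq] at he
    rw [e u huv.1.1 u' huv'.1.1 he.1, e v huv.1.2 v' huv'.1.2 he.2]

end Translation

/-! ### The congruencing step -/

section Congruencing

variable {k p r : ℕ}

lemma card_progression_le (hp : 0 < p) {a c : ℕ} (hac : a ≤ c) (ξ : ℤ) :
    ((Finset.Icc (1 : ℤ) ((p : ℤ) ^ c)).filter fun z => (p : ℤ) ^ a ∣ z - ξ).card ≤ p ^ (c - a) := by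
  have hq : 0 < (p : ℤ) ^ a := by positivity
  have hsub : ((Finset.Icc (1 : ℤ) ((p : ℤ) ^ c)).filter fun z => (p : ℤ) ^ a ∣ z - ξ) ⊆
      (Finset.range (p ^ (c - a))).image fun m : ℕ => rep ((p : ℤ) ^ a) ξ + (p : ℤ) ^ a * m := by
    intro z hz
    rw [Finset.mem_filter, Finset.mem_Icc] at hz
    obtain ⟨⟨hz1, hz2⟩, hd⟩ := hz
    have hrep := rep_mem hq ξ
    obtain ⟨m, hm⟩ := dvd_add hd (dvd_sub_rep ((p : ℤ) ^ a) ξ)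
    rw [sub_add_sub_cancel] at hm
    have hm0 : 0 ≤ m := by
      by_contra hneg
      push Not at hneg
      nlinarith
    have hpow : (p : ℤ) ^ c = (p : ℤ) ^ a * (p : ℤ) ^ (c - a) := by
      rw [← pow_add, Nat.add_sub_cancel' hac]
    have hm1 : m < (p : ℤ) ^ (c - a) := by
      by_contra hge
      push Not at hge
      nlinarith
    refine Finset.mem_image.2 ⟨m.toNat, Finset.mem_range.2 ?_, ?_⟩
    · zify
      rwa [Int.toNat_of_nonneg hm0]
    · rw [Int.toNat_of_nonneg hm0]
      linarith
  exact (Finset.card_le_card hsub).trans (Finset.card_image_le.trans (Finset.card_range _).le)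

/-- Extraction of the congruences implied by the conditioned block: a mean value of conditioned
type is bounded by one in which the first variables are confined to classes modulo `p^{tb}`. -/
theorem congruencing_step {t a b : ℕ} {ξ η : ℤ} (hp : p.Prime) (hr : 1 ≤ r) (hrk : r ≤ k)
    (hkp : k < p) (ht : 2 ≤ t) (h2t : k ≤ 2 * t + 1) (hab : a < b) (htab : t * a ≤ b)
    (hω : ¬ (p : ℤ) ∣ ξ - η) (X : ℝ) {K : ℝ}
    (hK : K = ∫ α in _root_.box k, ‖tupleSum k (tuples r X fun u =>
        Conditioned p a ξ u ∧ ∀ i, ¬ (p : ℤ) ∣ u i - η) α‖ ^ 2 * ‖Fexp k p r X b η α‖ ^ (2 * t))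
    (hK0 : 0 < K) :
    ∃ z : ℤ, 1 ≤ z ∧ z ≤ (p : ℤ) ^ (t * b) ∧ ¬ (p : ℤ) ∣ z - η ∧
      K ^ t ≤ ((r ^ r * p ^ (∑ l ∈ Finset.Icc (k - r + 1) t, ((t - l) * b + (k - l) * a)) : ℕ) *
          (((p ^ (t * b - a)) ^ r : ℕ) * r) : ℝ) ^ t *
        (Iab k p r (r * t) X b (t * b) η z *
          (∫ α in _root_.box k, ‖Fexp k p r X b η α‖ ^ (2 * (t + 1))) ^ (t - 1)) := by
  have hp0 : 0 < p := hp.pos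
  have htb : a + 1 ≤ t * b := by nlinarith
  set S := tuples r X fun u => Conditioned p a ξ u ∧ ∀ i, ¬ (p : ℤ) ∣ u i - η with hS
  set q : ℤ := (p : ℤ) ^ (t * b) with hqdef
  have hq : 0 < q := by positivity
  have hqa : (p : ℤ) ^ (a + 1) ∣ q := pow_dvd_pow _ htb
  have hqa' : (p : ℤ) ^ a ∣ q := pow_dvd_pow _ (by omega)
  have hq1 : (p : ℤ) ∣ q := dvd_pow_self _ (by omega)
  set φ : (Fin r → ℤ) → Fin k → ℤ := fun u => ∑ i, vec k (u i) with hφ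
  set cl : (Fin r → ℤ) → Fin r → ℤ := fun u i => rep q (u i) with hcl
  set n := r ^ r * p ^ (∑ l ∈ Finset.Icc (k - r + 1) t, ((t - l) * b + (k - l) * a)) with hn
  have hHc : Continuous fun α => ‖Fexp k p r X b η α‖ ^ (2 * t) :=
    (continuous_Fexp hp0 X b η).norm.pow _
  have hfc : ∀ z, Continuous fun α => ‖fexp k p X (t * b) z α‖ := fun z =>
    (continuous_fexp X (t * b) z).norm
  have hSmem : ∀ u, u ∈ S ↔ (∀ i, u i ∈ Finset.Icc (1 : ℤ) ⌊X⌋) ∧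
      Conditioned p a ξ u ∧ ∀ i, ¬ (p : ℤ) ∣ u i - η := fun u => mem_tuples
  have hcount : ∀ u ∈ S, ((S.filter fun v => φ u - φ v ∈ congGroup k p b η).image cl).card ≤ n := by
    intro u _
    set S' := S.filter fun v => φ u - φ v ∈ congGroup k p b η with hS'
    have hex : ∀ c ∈ S'.image cl, ∃ z ∈ S', cl z = c := fun c hc => Finset.mem_image.1 hc
    choose! g hg hcg using hex
    have hcard : ((S'.image cl).image g).card = (S'.image cl).card := by
      refine Finset.card_image_of_injOn fun c hc c' hc' h => ?_
      rw [← hcg c hc, ← hcg c' hc', h]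
    rw [← hcard]
    have hZ : ∀ z ∈ (S'.image cl).image g, z ∈ S' := by
      intro z hz
      obtain ⟨c, hc, rfl⟩ := Finset.mem_image.1 hz
      exact hg c hc
    have hZS : ∀ z ∈ (S'.image cl).image g, Conditioned p a ξ z ∧ ∀ i, ¬ (p : ℤ) ∣ z i - η :=
      fun z hz => ((hSmem z).1 (Finset.mem_filter.1 (hZ z hz)).1).2
    refine card_congruence_classes hp hrk hkp (by omega) h2t hab htab hω _
      (fun z hz => (hZS z hz).1.1) (fun z hz => (hZS z hz).2) (fun z hz => (hZS z hz).1.2) ?_ ?_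
    · intro z hz z' hz'
      have h1 := (Finset.mem_filter.1 (hZ z hz)).2
      have h2 := (Finset.mem_filter.1 (hZ z' hz')).2
      have h3 := AddSubgroup.sub_mem _ h2 h1
      rw [sub_sub_sub_cancel_left] at h3
      exact sub_mem_congGroup_iff.1 h3
    · intro z hz z' hz' h
      obtain ⟨c, hc, rfl⟩ := Finset.mem_image.1 hz
      obtain ⟨c', hc', rfl⟩ := Finset.mem_image.1 hz'
      have : c = c' := by
        rw [← hcg c hc, ← hcg c' hc']
        ext i
        refine (rep_eq_iff (rep_mem hq _)).2 ?_
        rw [dvd_sub_comm, dvd_rep_sub_iff dvd_rfl, dvd_sub_comm]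
        exact h i
      rw [this]
  have hstep := integral_norm_sq_le_card_mul_sum_classes
    ((isTrigSum_norm_sq_Fexp hp0 X b η).norm_pow t) hHc (fun α => by positivity) S φ cl n hcount
  set R := (Finset.Icc (1 : ℤ) q).filter fun z => (p : ℤ) ^ a ∣ z - ξ ∧ ¬ (p : ℤ) ∣ z - η with hR
  have hclR : ∀ c ∈ S.image cl, ∀ i, c i ∈ R := by
    intro c hc i
    obtain ⟨u, hu, rfl⟩ := Finset.mem_image.1 hc
    obtain ⟨-, h1, h2⟩ := (hSmem u).1 hu
    rw [hR, Finset.mem_filter, Finset.mem_Icc, dvd_rep_sub_iff hqa', dvd_rep_sub_iff hq1]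
    exact ⟨rep_mem hq _, h1.1 i, h2 i⟩
  have hRcard : R.card ≤ p ^ (t * b - a) := by
    refine le_trans (Finset.card_le_card fun z hz => ?_)
      (card_progression_le hp0 (by omega : a ≤ t * b) ξ)
    rw [hR, Finset.mem_filter] at hz
    exact Finset.mem_filter.2 ⟨hz.1, hz.2.1⟩
  have hclcard : (S.image cl).card ≤ (p ^ (t * b - a)) ^ r := by
    calc (S.image cl).card ≤ (Fintype.piFinset fun _ : Fin r => R).card :=
          Finset.card_le_card fun c hc => Fintype.mem_piFinset.2 (hclR c hc)
      _ = R.card ^ r := by simp [Fintype.card_piFinset]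
      _ ≤ _ := Nat.pow_le_pow_left hRcard r
  have hSne : S.Nonempty := by
    rw [Finset.nonempty_iff_ne_empty]
    intro h0
    rw [h0] at hK
    simp [tupleSum] at hK
    exact hK0.ne' hK
  have hRne : R.Nonempty := by
    obtain ⟨u, hu⟩ := hSne
    exact ⟨_, hclR _ (Finset.mem_image_of_mem cl hu) ⟨0, hr⟩⟩
  set G : ℤ → ℝ := fun z => ∫ α in _root_.box k, ‖fexp k p X (t * b) z α‖ ^ (2 * r) *
    ‖Fexp k p r X b η α‖ ^ (2 * t) with hG
  obtain ⟨z, hzR, hzmax⟩ := Finset.exists_max_image R G hRne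
  have hGi : ∀ z, IntegrableOn (fun α => ‖fexp k p X (t * b) z α‖ ^ (2 * r) *
      ‖Fexp k p r X b η α‖ ^ (2 * t)) (_root_.box k) := fun z =>
    integrableOn_box (((hfc z).pow _).mul hHc)
  have hclass : ∀ c ∈ S.image cl, ∫ α in _root_.box k,
      ‖∑ u ∈ S with cl u = c, chr (φ u) α‖ ^ 2 * ‖Fexp k p r X b η α‖ ^ (2 * t) ≤ r * G z := by
    intro c hc
    have hfib : (S.filter fun u => cl u = c) =
        Fintype.piFinset fun i => progr p X (t * b) (c i) := by
      ext u
      rw [Finset.mem_filter, hSmem, Fintype.mem_piFinset]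
      simp only [mem_progr]
      obtain ⟨w, hw, rfl⟩ := Finset.mem_image.1 hc
      obtain ⟨-, hw1, hw2⟩ := (hSmem w).1 hw
      constructor
      · rintro ⟨⟨h1, -⟩, h2⟩ i
        refine ⟨h1 i, ?_⟩
        rw [← h2]
        exact dvd_sub_rep q (u i)
      · intro h
        have hcu : cl u = cl w := funext fun i => (rep_eq_iff (rep_mem hq _)).2 (h i).2
        have hrep : ∀ i, rep q (u i) = rep q (w i) := fun i => congrFun hcu i
        refine ⟨⟨fun i => (h i).1, ⟨fun i => ?_, fun i j hij => ?_⟩, fun i => ?_⟩, hcu⟩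
        · rw [← dvd_rep_sub_iff hqa', hrep, dvd_rep_sub_iff hqa']
          exact hw1.1 i
        · rw [← dvd_rep_sub_rep_iff hqa, hrep, hrep, dvd_rep_sub_rep_iff hqa]
          exact hw1.2 i j hij
        · rw [← dvd_rep_sub_iff hq1, hrep, dvd_rep_sub_iff hq1]
          exact hw2 i
    have hprod : ∀ α, ∑ u ∈ S with cl u = c, chr (φ u) α = ∏ i, fexp k p X (t * b) (c i) α := by
      intro α
      rw [prod_fexp_eq, hfib]
      rfl
    simp only [hprod]
    calc ∫ α in _root_.box k,
          ‖∏ i, fexp k p X (t * b) (c i) α‖ ^ 2 * ‖Fexp k p r X b η α‖ ^ (2 * t)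
        ≤ ∫ α in _root_.box k, ∑ i, ‖fexp k p X (t * b) (c i) α‖ ^ (2 * r) *
            ‖Fexp k p r X b η α‖ ^ (2 * t) := by
          refine integral_mono ?_ (integrable_finsetSum _ fun i _ => hGi (c i)) fun α => ?_
          · have : Continuous fun α => ∏ i, fexp k p X (t * b) (c i) α :=
              continuous_finsetProd _ fun i _ => continuous_fexp X (t * b) (c i)
            exact integrableOn_box ((this.norm.pow 2).mul hHc)
          · dsimp only
            rw [← Finset.sum_mul, norm_prod, ← Finset.prod_pow]
            refine mul_le_mul_of_nonneg_right ?_ (by positivity)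
            simp only [pow_mul]
            exact prod_le_sum_pow hr fun i => by positivity
      _ = ∑ i, G (c i) := integral_finsetSum _ fun i _ => hGi (c i)
      _ ≤ ∑ _i : Fin r, G z := Finset.sum_le_sum fun i _ => hzmax _ (hclR c hc i)
      _ = r * G z := by simp
  have hG0 : 0 ≤ G z := integral_nonneg fun α => by positivity
  have hKG : K ≤ n * (((p ^ (t * b - a)) ^ r : ℕ) * r) * G z := by
    calc K ≤ n * ∑ c ∈ S.image cl, ∫ α in _root_.box k,
          ‖∑ u ∈ S with cl u = c, chr (φ u) α‖ ^ 2 * ‖Fexp k p r X b η α‖ ^ (2 * t) := by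
          rw [hK]; exact hstep
      _ ≤ n * ∑ _c ∈ S.image cl, r * G z := by gcongr with c hc; exact hclass c hc
      _ = n * ((S.image cl).card * (r * G z)) := by rw [Finset.sum_const, nsmul_eq_mul]
      _ ≤ n * (((p ^ (t * b - a)) ^ r : ℕ) * (r * G z)) := by gcongr
      _ = _ := by ring
  have hholder : G z ^ t ≤ Iab k p r (r * t) X b (t * b) η z *
      (∫ α in _root_.box k, ‖Fexp k p r X b η α‖ ^ (2 * (t + 1))) ^ (t - 1) := by
    have h := integral_pow_mul_pow_le (k := k) (u := fun α => ‖fexp k p X (t * b) z α‖ ^ (2 * r))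
      (w := fun α => ‖Fexp k p r X b η α‖ ^ 2) (h := fun α => ‖Fexp k p r X b η α‖ ^ 2)
      ((hfc z).pow _) ((continuous_Fexp hp0 X b η).norm.pow _)
      ((continuous_Fexp hp0 X b η).norm.pow _) (fun α => by positivity) (fun α => by positivity)
      (fun α => by positivity) (i := 1) (n := t) (by omega) (by omega)
    have e1 : ∀ α, (‖fexp k p X (t * b) z α‖ ^ (2 * r)) ^ 1 *
        (‖Fexp k p r X b η α‖ ^ 2) ^ (t - 1) * ‖Fexp k p r X b η α‖ ^ 2 =
        ‖fexp k p X (t * b) z α‖ ^ (2 * r) * ‖Fexp k p r X b η α‖ ^ (2 * t) := by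
      intro α
      rw [pow_one, mul_assoc, ← pow_succ, Nat.sub_add_cancel (by omega), ← pow_mul]
    have e2 : ∀ α, (‖fexp k p X (t * b) z α‖ ^ (2 * r)) ^ t * ‖Fexp k p r X b η α‖ ^ 2 =
        ‖Fexp k p r X b η α‖ ^ 2 * ‖fexp k p X (t * b) z α‖ ^ (2 * (r * t)) := by
      intro α
      rw [mul_comm, ← pow_mul, mul_assoc]
    have e3 : ∀ α, (‖Fexp k p r X b η α‖ ^ 2) ^ t * ‖Fexp k p r X b η α‖ ^ 2 =
        ‖Fexp k p r X b η α‖ ^ (2 * (t + 1)) := by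
      intro α
      rw [← pow_succ, ← pow_mul]
    simp only [e1, e2, e3] at h
    rwa [pow_one] at h
  rw [hR, Finset.mem_filter, Finset.mem_Icc] at hzR
  refine ⟨z, hzR.1.1, hzR.1.2, hzR.2.2, ?_⟩
  calc K ^ t ≤ (n * (((p ^ (t * b - a)) ^ r : ℕ) * r) * G z) ^ t := pow_le_pow_left₀ hK0.le hKG t
    _ = (n * (((p ^ (t * b - a)) ^ r : ℕ) * r) : ℝ) ^ t * G z ^ t := mul_pow _ _ _
    _ ≤ _ := by gcongr

end Congruencing

/-! ### The conditioning step -/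

section Conditioning

variable {k p r : ℕ}

/-- Summation over tuples of which a sub-tuple is restricted to a given set. -/
lemma sum_filter_comp_embedding {m s : ℕ} (e : Fin m ↪ Fin s) (B : Finset ℤ)
    (D : Finset (Fin m → ℤ)) (hD : D ⊆ Fintype.piFinset fun _ => B) (g : ℤ → ℂ) :
    ∑ v ∈ (Fintype.piFinset fun _ : Fin s => B) with (fun i => v (e i)) ∈ D, ∏ i, g (v i) =
      (∑ u ∈ D, ∏ i, g (u i)) * (∑ x ∈ B, g x) ^ (s - m) := by
  set κ := ((Set.range e)ᶜ : Set (Fin s))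
  let σ : Fin m ⊕ κ ≃ Fin s :=
    ((Equiv.ofInjective e e.injective).sumCongr (Equiv.refl κ)).trans (Equiv.Set.sumCompl _)
  have hσl : ∀ i, σ (Sum.inl i) = e i := fun i => rfl
  have hcard : Fintype.card κ = s - m := by
    have h := Fintype.card_congr σ
    rw [Fintype.card_sum, Fintype.card_fin, Fintype.card_fin] at h
    omega
  have hprod : ∀ w : Fin s → ℂ, ∏ i, w i = (∏ i, w (e i)) * ∏ j : κ, w (σ (Sum.inr j)) := by
    intro w
    rw [← Equiv.prod_comp σ w, Fintype.prod_sum_type]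
    rfl
  have hpow : (∑ x ∈ B, g x) ^ (s - m) = ∑ y ∈ Fintype.piFinset fun _ : κ => B, ∏ j, g (y j) := by
    rw [← Finset.prod_univ_sum, Finset.prod_const, Finset.card_univ, hcard]
  rw [hpow, Finset.sum_mul_sum, ← Finset.sum_product']
  refine Finset.sum_bij' (fun v _ => (fun i => v (e i), fun j => v (σ (Sum.inr j))))
    (fun x _ i => Sum.elim x.1 x.2 (σ.symm i)) ?_ ?_ ?_ ?_ ?_
  · intro v hv
    rw [Finset.mem_filter, Fintype.mem_piFinset] at hv
    exact Finset.mem_product.2 ⟨hv.2, Fintype.mem_piFinset.2 fun j => hv.1 _⟩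
  · rintro ⟨u, y⟩ hx
    rw [Finset.mem_product] at hx
    have h1 := Fintype.mem_piFinset.1 (hD hx.1)
    have h2 := Fintype.mem_piFinset.1 hx.2
    refine Finset.mem_filter.2 ⟨Fintype.mem_piFinset.2 fun i => ?_, ?_⟩
    · dsimp only
      rcases σ.symm i with j | j
      exacts [h1 j, h2 j]
    · have : (fun i => Sum.elim u y (σ.symm (e i))) = u := by
        ext i
        rw [← hσl, Equiv.symm_apply_apply, Sum.elim_inl]
      dsimp only
      rw [this]
      exact hx.1
  · intro v _
    ext i
    dsimp only
    obtain ⟨j, rfl⟩ := σ.surjective i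
    rw [Equiv.symm_apply_apply]
    rcases j with j | j
    exacts [congrArg v (hσl j).symm, rfl]
  · rintro ⟨u, y⟩ _
    ext i
    · dsimp only
      rw [← hσl, Equiv.symm_apply_apply, Sum.elim_inl]
    · dsimp only
      rw [Equiv.symm_apply_apply, Sum.elim_inr]
  · intro v _
    exact hprod fun i => g (v i)

/-- Either `r` of the `rt` entries have distinct labels, or `t + 1` of them share a label. -/
lemma exists_embedding_distinct_or_constant {κ : Type*} [DecidableEq κ] {t : ℕ}
    (ht : 1 ≤ t) (v : Fin (r * t) → κ) :
    (∃ e : Fin r ↪ Fin (r * t), Function.Injective fun i => v (e i)) ∨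
      ∃ y, ∃ e : Fin (t + 1) ↪ Fin (r * t), (∀ i, v (e i) = y) := by
  by_cases h : r ≤ (Finset.univ.image v).card
  · left
    obtain ⟨T, hT, hTr⟩ := Finset.exists_subset_card_eq h
    have hex : ∀ y : T, ∃ i, v i = y := fun y => by
      obtain ⟨i, -, hi⟩ := Finset.mem_image.1 (hT y.2)
      exact ⟨i, hi⟩
    choose g hg using hex
    let σ : Fin r ≃ T := (Finset.equivFinOfCardEq hTr).symm
    have hinj : Function.Injective fun i => v (g (σ i)) := fun i j hij => by
      simp only [hg] at hij
      exact σ.injective (Subtype.ext hij)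
    exact ⟨⟨fun i => g (σ i), fun i j hij => hinj (congrArg v hij)⟩, hinj⟩
  · right
    push Not at h
    obtain ⟨y, -, hy⟩ := Finset.exists_lt_card_fiber_of_mul_lt_card_of_maps_to
      (s := (Finset.univ : Finset (Fin (r * t)))) (t := Finset.univ.image v) (f := v) (n := t)
      (fun i hi => Finset.mem_image_of_mem v hi)
      (by rw [Finset.card_univ, Fintype.card_fin]; exact Nat.mul_lt_mul_of_pos_right h ht)
    obtain ⟨T, hT, hTc⟩ := Finset.exists_subset_card_eq (Nat.succ_le_of_lt hy)
    let σ : Fin (t + 1) ≃ T := (Finset.equivFinOfCardEq hTc).symm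
    refine ⟨y, ⟨fun i => (σ i : Fin (r * t)), fun i j hij => σ.injective (Subtype.ext hij)⟩,
      fun i => ?_⟩
    exact (Finset.mem_filter.1 (hT (σ i).2)).2

/-- The number of ways of placing the conditioned or the repeated variables. -/
def placements (r t : ℕ) : ℕ :=
  Fintype.card (Fin r ↪ Fin (r * t)) + Fintype.card (Fin (t + 1) ↪ Fin (r * t))

lemma Iab_nonneg (k p r s : ℕ) (X : ℝ) (a b : ℕ) (ξ η : ℤ) : 0 ≤ Iab k p r s X a b ξ η :=
  integral_nonneg fun α => by positivity

lemma Kab_nonneg (k p r t : ℕ) (X : ℝ) (a b : ℕ) (ξ η : ℤ) : 0 ≤ Kab k p r t X a b ξ η :=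
  integral_nonneg fun α => by positivity

/-- Splitting the unconditioned variables according to the number of classes they occupy. -/
lemma Iab_le_sum {t a c : ℕ} {ξ η : ℤ} (hp : p.Prime) (ht : 1 ≤ t) (X : ℝ) :
    ∃ ζ : ℤ, 1 ≤ ζ ∧ ζ ≤ (p : ℤ) ^ (c + 1) ∧ (p : ℤ) ^ c ∣ ζ - η ∧
      Iab k p r (r * t) X a c ξ η ≤
        placements r t * (∫ α in _root_.box k, ‖Fexp k p r X c η α‖ ^ 1 *
          (‖fexp k p X c η α‖ ^ r) ^ (2 * t - 1) * ‖Fexp k p r X a ξ α‖ ^ 2) +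
        placements r t * (p * ∫ α in _root_.box k, ‖fexp k p X (c + 1) ζ α‖ ^ (t + 1) *
          ‖fexp k p X c η α‖ ^ (2 * (r * t) - (t + 1)) * ‖Fexp k p r X a ξ α‖ ^ 2) := by
  have hp0 : 0 < p := hp.pos
  have hq : 0 < (p : ℤ) ^ (c + 1) := by positivity
  have hqc : (p : ℤ) ^ c ∣ (p : ℤ) ^ (c + 1) := pow_dvd_pow _ (Nat.le_succ c)
  set s := r * t with hs
  have hrs : r ≤ s := Nat.le_mul_of_pos_right r ht
  set B := progr p X c η with hB
  set f := fexp k p X c η with hf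
  set F := Fexp k p r X a ξ with hF
  have hfc : Continuous f := continuous_fexp X c η
  have hFc : Continuous F := continuous_Fexp hp0 X a ξ
  have hft : IsTrigSum ⊤ f := by
    rw [hf, funext (fexp_eq X c η)]
    exact isTrigSum_sum_chr _ _
  have hFt : IsTrigSum ⊤ F := by
    rw [hF, funext (Fexp_eq hp0 X a ξ)]
    exact isTrigSum_sum_chr _ _
  set R := (Finset.Icc (1 : ℤ) ((p : ℤ) ^ (c + 1))).filter fun z => (p : ℤ) ^ c ∣ z - η with hR
  have hRcard : R.card ≤ p := by
    simpa using card_progression_le hp0 (Nat.le_succ c) η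
  have hRne : R.Nonempty :=
    ⟨rep ((p : ℤ) ^ (c + 1)) η, Finset.mem_filter.2 ⟨Finset.mem_Icc.2 (rep_mem hq η),
      (dvd_rep_sub_iff hqc).2 (by simp)⟩⟩
  set T2 : ℤ → ℝ := fun ζ => ∫ α in _root_.box k, ‖fexp k p X (c + 1) ζ α‖ ^ (t + 1) *
          ‖f α‖ ^ (2 * s - (t + 1)) * ‖F α‖ ^ 2 with hT2
  set T1 : ℝ := ∫ α in _root_.box k, ‖Fexp k p r X c η α‖ ^ 1 *
          (‖f α‖ ^ r) ^ (2 * t - 1) * ‖F α‖ ^ 2 with hT1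
  obtain ⟨ζ, hζ, hζmax⟩ := Finset.exists_max_image R T2 hRne
  have hT1nn : 0 ≤ T1 := integral_nonneg fun α => by positivity
  have hT2nn : 0 ≤ T2 ζ := integral_nonneg fun α => by positivity
  have hζ' := Finset.mem_filter.1 hζ
  have hζ'' := Finset.mem_Icc.1 hζ'.1
  refine ⟨ζ, hζ''.1, hζ''.2, hζ'.2, ?_⟩
  set G : (Fin k → ℝ) → ℂ := fun α => F α * star (F α) * star (f α) ^ s with hG
  have hGt : IsTrigSum ⊤ G := (hFt.mul hFt.star).mul (hft.star.pow s)
  have hGn : ∀ α, ‖G α‖ = ‖F α‖ ^ 2 * ‖f α‖ ^ s := fun α => by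
    simp only [hG, norm_mul, norm_pow, norm_star]
    ring
  set V := Fintype.piFinset fun _ : Fin s => B with hV
  set χ : (Fin s → ℤ) → Fin k → ℤ := fun v => ∑ i, vec k (v i) with hχ
  have hfs : ∀ α, f α ^ s = ∑ v ∈ V, chr (χ v) α := fun α => by
    have := prod_fexp_eq (k := k) (p := p) X c (fun _ : Fin s => η) α
    rwa [Finset.prod_const, Finset.card_univ, Fintype.card_fin] at this
  have hI : ‖∫ α in _root_.box k, G α * ∑ v ∈ V, chr (χ v) α‖ = Iab k p r s X a c ξ η := by
    have h1 : ∀ α, G α * ∑ v ∈ V, chr (χ v) α = ((‖F α‖ ^ 2 * ‖f α‖ ^ (2 * s) : ℝ) : ℂ) := by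
      intro α
      rw [Complex.ofReal_mul, TrigLE.ofReal_norm_pow, ← hfs,
        show ‖F α‖ ^ 2 = ‖F α‖ ^ (2 * 1) by rw [mul_one], TrigLE.ofReal_norm_pow]
      simp only [hG]
      ring
    simp only [h1]
    rw [integral_complex_ofReal, Complex.norm_real, Real.norm_of_nonneg]
    · rfl
    · exact Iab_nonneg k p r s X a c ξ η
  have hDsub : tuples r X (Conditioned p c η) ⊆ Fintype.piFinset fun _ => B := fun u hu => by
    rw [mem_tuples] at hu
    exact Fintype.mem_piFinset.2 fun i => mem_progr.2 ⟨hu.1 i, hu.2.1 i⟩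
  have hCsub : ∀ z ∈ R, (Fintype.piFinset fun _ : Fin (t + 1) => progr p X (c + 1) z) ⊆
      Fintype.piFinset fun _ => B := by
    intro z hz u hu
    refine Fintype.mem_piFinset.2 fun i => ?_
    have h := mem_progr.1 (Fintype.mem_piFinset.1 hu i)
    refine mem_progr.2 ⟨h.1, ?_⟩
    have := dvd_add (hqc.trans h.2) (Finset.mem_filter.1 hz).2
    rwa [sub_add_sub_cancel] at this
  let W : (Fin r ↪ Fin s) ⊕ (ℤ × (Fin (t + 1) ↪ Fin s)) → Finset (Fin s → ℤ) :=
    Sum.elim (fun e => V.filter fun v => (fun i => v (e i)) ∈ tuples r X (Conditioned p c η))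
      (fun x => V.filter fun v => (fun i => v (x.2 i)) ∈
        Fintype.piFinset fun _ : Fin (t + 1) => progr p X (c + 1) x.1)
  set L : Finset ((Fin r ↪ Fin s) ⊕ (ℤ × (Fin (t + 1) ↪ Fin s))) :=
    Finset.univ.disjSum (R ×ˢ Finset.univ) with hL
  have hcover : ∀ v ∈ V, ∃ l ∈ L, v ∈ W l := by
    intro v hv
    have hvB := Fintype.mem_piFinset.1 hv
    rcases exists_embedding_distinct_or_constant ht
      (fun i => rep ((p : ℤ) ^ (c + 1)) (v i)) with ⟨e, he⟩ | ⟨y, e, he⟩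
    · refine ⟨Sum.inl e, Finset.inl_mem_disjSum.2 (Finset.mem_univ e),
        Finset.mem_filter.2 ⟨hv, mem_tuples.2 ⟨fun i => (mem_progr.1 (hvB _)).1,
          fun i => (mem_progr.1 (hvB _)).2, fun i j hij hd => hij (he ?_)⟩⟩⟩
      refine (rep_eq_iff (rep_mem hq _)).2 ?_
      rw [dvd_sub_comm, dvd_rep_sub_iff dvd_rfl, dvd_sub_comm]
      exact hd
    · have hyR : y ∈ R := by
        rw [← he 0]
        exact Finset.mem_filter.2 ⟨Finset.mem_Icc.2 (rep_mem hq _),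
          (dvd_rep_sub_iff hqc).2 (mem_progr.1 (hvB _)).2⟩
      have hy := Finset.mem_Icc.1 (Finset.mem_filter.1 hyR).1
      refine ⟨Sum.inr (y, e), Finset.inr_mem_disjSum.2 (Finset.mem_product.2
        ⟨hyR, Finset.mem_univ e⟩), Finset.mem_filter.2 ⟨hv, Fintype.mem_piFinset.2 fun i => ?_⟩⟩
      exact mem_progr.2 ⟨(mem_progr.1 (hvB _)).1, (rep_eq_iff hy).1 (he i)⟩
  have hmain := norm_integral_mul_sum_chr_le hGt χ V L W hcover
  rw [hI, hL, Finset.sum_disjSum, Finset.sum_product] at hmain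
  have hχp : ∀ v α, chr (χ v) α = ∏ i, chr (vec k (v i)) α := fun v α => chr_sum _ _ _
  have hinl : ∀ e : Fin r ↪ Fin s,
      ∫ α in _root_.box k, ‖G α‖ * ‖∑ v ∈ W (Sum.inl e), chr (χ v) α‖ = T1 := by
    intro e
    refine integral_congr_ae (Eventually.of_forall fun α => ?_)
    dsimp only
    have h1 : ∑ v ∈ W (Sum.inl e), chr (χ v) α = Fexp k p r X c η α * f α ^ (s - r) := by
      simp only [hχp]
      refine (sum_filter_comp_embedding e B _ hDsub fun x => chr (vec k x) α).trans ?_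
      rw [← fexp_eq, Fexp_eq hp0, tupleSum]
      simp only [chr_sum]
      rfl
    rw [h1, hGn, norm_mul, norm_pow, pow_one, ← pow_mul]
    have h2 : s + (s - r) = r * (2 * t - 1) := by
      rw [Nat.mul_sub, ← mul_assoc, mul_comm r 2, mul_assoc, mul_one]
      omega
    rw [← h2, pow_add]
    ring
  have hinr : ∀ z ∈ R, ∀ e : Fin (t + 1) ↪ Fin s,
      ∫ α in _root_.box k, ‖G α‖ * ‖∑ v ∈ W (Sum.inr (z, e)), chr (χ v) α‖ = T2 z := by
    intro z hz e
    have hts : t + 1 ≤ s := by simpa using Fintype.card_le_of_embedding e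
    refine integral_congr_ae (Eventually.of_forall fun α => ?_)
    dsimp only
    have h1 : ∑ v ∈ W (Sum.inr (z, e)), chr (χ v) α =
        fexp k p X (c + 1) z α ^ (t + 1) * f α ^ (s - (t + 1)) := by
      simp only [hχp]
      refine (sum_filter_comp_embedding e B _ (hCsub z hz) fun x => chr (vec k x) α).trans ?_
      have h0 := prod_fexp_eq (k := k) (p := p) X (c + 1) (fun _ : Fin (t + 1) => z) α
      simp only [tupleSum, chr_sum, Finset.prod_const, Finset.card_univ, Fintype.card_fin] at h0
      rw [← fexp_eq, h0]
    rw [h1, hGn, norm_mul, norm_pow, norm_pow]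
    have h2 : s + (s - (t + 1)) = 2 * s - (t + 1) := by omega
    rw [← h2, pow_add]
    ring
  simp only [hinl] at hmain
  refine hmain.trans (add_le_add ?_ ?_)
  · rw [Finset.sum_const, nsmul_eq_mul, Finset.card_univ]
    refine mul_le_mul_of_nonneg_right ?_ hT1nn
    unfold placements
    push_cast
    linarith [Nat.cast_nonneg (α := ℝ) (Fintype.card (Fin (t + 1) ↪ Fin s))]
  · calc _ ≤ ∑ z ∈ R, ∑ _e : Fin (t + 1) ↪ Fin s, T2 ζ :=
          Finset.sum_le_sum fun z hz => Finset.sum_le_sum fun e _ => by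
            rw [hinr z hz e]; exact hζmax z hz
      _ = R.card * (Fintype.card (Fin (t + 1) ↪ Fin s) * T2 ζ) := by
          simp only [Finset.sum_const, nsmul_eq_mul, Finset.card_univ]
      _ ≤ p * (placements r t * T2 ζ) := by
          have h1 : (Fintype.card (Fin (t + 1) ↪ Fin s) : ℝ) ≤ placements r t := by
            unfold placements
            push_cast
            linarith [Nat.cast_nonneg (α := ℝ) (Fintype.card (Fin r ↪ Fin s))]
          gcongr
      _ = _ := by ring

/-- The conditioning step. -/
theorem conditioning_step {t a c : ℕ} {ξ η : ℤ} (hp : p.Prime) (hr : 1 ≤ r) (ht : 2 ≤ t) (X : ℝ) :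
    Iab k p r (r * t) X a c ξ η ≤ (2 * placements r t : ℝ) ^ (2 * (r * t)) * Kab k p r t X a c ξ η ∨
    ∃ ζ : ℤ, 1 ≤ ζ ∧ ζ ≤ (p : ℤ) ^ (c + 1) ∧ (p : ℤ) ^ c ∣ ζ - η ∧
      Iab k p r (r * t) X a c ξ η ≤ (2 * placements r t : ℝ) ^ (2 * (r * t)) *
        (p : ℝ) ^ (2 * ((r * t : ℕ) : ℝ) / 3) * Iab k p r (r * t) X a (c + 1) ξ ζ := by
  have hp0 : 0 < p := hp.pos
  have hrt : t ≤ r * t := Nat.le_mul_of_pos_left t hr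
  obtain ⟨ζ, hζ1, hζ2, hζ3, hsum⟩ := Iab_le_sum (k := k) (t := t) (a := a) (c := c) (ξ := ξ) (η := η)
    hp (by omega) X
  set I := Iab k p r (r * t) X a c ξ η with hI
  set E : ℝ := 2 * placements r t with hE
  set T1 := ∫ α in _root_.box k, ‖Fexp k p r X c η α‖ ^ 1 *
          (‖fexp k p X c η α‖ ^ r) ^ (2 * t - 1) * ‖Fexp k p r X a ξ α‖ ^ 2
  set T2 := ∫ α in _root_.box k, ‖fexp k p X (c + 1) ζ α‖ ^ (t + 1) *
          ‖fexp k p X c η α‖ ^ (2 * (r * t) - (t + 1)) * ‖Fexp k p r X a ξ α‖ ^ 2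
  have hE1 : 1 ≤ E := by
    have : 1 ≤ placements r t := by
      have : 0 < Fintype.card (Fin r ↪ Fin (r * t)) :=
        Fintype.card_pos_iff.2 ⟨Fin.castLEEmb (Nat.le_mul_of_pos_right r (by omega))⟩
      unfold placements
      omega
    have : (1 : ℝ) ≤ placements r t := by exact_mod_cast this
    linarith
  have hI0 : 0 ≤ I := Iab_nonneg k p r (r * t) X a c ξ η
  have hKnn := Kab_nonneg k p r t X a c ξ η
  have hFa := (continuous_Fexp (k := k) (r := r) hp0 X a ξ).norm
  have hFcc := (continuous_Fexp (k := k) (r := r) hp0 X c η).norm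
  have hfc := (continuous_fexp (k := k) (p := p) X c η).norm
  have hfc' := (continuous_fexp (k := k) (p := p) X (c + 1) ζ).norm
  rcases hI0.eq_or_lt with h0 | hpos
  · left
    rw [← h0]
    positivity
  rcases le_total (p * T2) T1 with hle | hle
  · left
    have h1 : I ≤ E * T1 := by
      have : (placements r t : ℝ) * (p * T2) ≤ placements r t * T1 := by gcongr
      rw [hE]; linarith
    have h2 := integral_pow_mul_pow_le (k := k) (u := fun α => ‖Fexp k p r X c η α‖)
      (w := fun α => ‖fexp k p X c η α‖ ^ r) (h := fun α => ‖Fexp k p r X a ξ α‖ ^ 2)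
      hFcc (hfc.pow r) (hFa.pow 2)
      (fun α => by positivity) (fun α => by positivity) (fun α => by positivity)
      (i := 1) (n := 2 * t) (by omega) (by omega)
    have e1 : ∀ α, ‖Fexp k p r X c η α‖ ^ (2 * t) * ‖Fexp k p r X a ξ α‖ ^ 2 =
        ‖Fexp k p r X a ξ α‖ ^ 2 * ‖Fexp k p r X c η α‖ ^ (2 * t) := fun α => mul_comm _ _
    have e2 : ∀ α, (‖fexp k p X c η α‖ ^ r) ^ (2 * t) * ‖Fexp k p r X a ξ α‖ ^ 2 =
        ‖Fexp k p r X a ξ α‖ ^ 2 * ‖fexp k p X c η α‖ ^ (2 * (r * t)) := fun α => by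
      rw [mul_comm, ← pow_mul, mul_left_comm]
    simp only [e1, e2] at h2
    have h3 : T1 ^ (2 * t) ≤ Kab k p r t X a c ξ η * I ^ (2 * t - 1) := by
      rwa [pow_one] at h2
    have h4 : I * I ^ (2 * t - 1) ≤ E ^ (2 * t) * Kab k p r t X a c ξ η * I ^ (2 * t - 1) := by
      calc I * I ^ (2 * t - 1) = I ^ (2 * t) := by
            rw [← pow_succ', Nat.sub_add_cancel (by omega)]
        _ ≤ (E * T1) ^ (2 * t) := pow_le_pow_left₀ hI0 h1 _
        _ = E ^ (2 * t) * T1 ^ (2 * t) := mul_pow _ _ _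
        _ ≤ E ^ (2 * t) * (Kab k p r t X a c ξ η * I ^ (2 * t - 1)) := by gcongr
        _ = _ := by ring
    have h5 := le_of_mul_le_mul_right h4 (pow_pos hpos _)
    refine h5.trans (mul_le_mul_of_nonneg_right (pow_le_pow_right₀ hE1 (by omega)) hKnn)
  · right
    refine ⟨ζ, hζ1, hζ2, hζ3, ?_⟩
    set I' := Iab k p r (r * t) X a (c + 1) ξ ζ with hI'
    have hI'0 : 0 ≤ I' := Iab_nonneg k p r (r * t) X a (c + 1) ξ ζ
    have h1 : I ≤ E * p * T2 := by
      have : (placements r t : ℝ) * T1 ≤ placements r t * (p * T2) := by gcongr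
      rw [hE]; linarith
    have h2 := integral_pow_mul_pow_le (k := k) (u := fun α => ‖fexp k p X (c + 1) ζ α‖)
      (w := fun α => ‖fexp k p X c η α‖) (h := fun α => ‖Fexp k p r X a ξ α‖ ^ 2)
      hfc' hfc (hFa.pow 2)
      (fun α => by positivity) (fun α => by positivity) (fun α => by positivity)
      (i := t + 1) (n := 2 * (r * t)) (by omega) (by omega)
    simp only [mul_comm _ (‖Fexp k p r X a ξ _‖ ^ 2)] at h2
    have h3 : T2 ^ (2 * (r * t)) ≤ I' ^ (t + 1) * I ^ (2 * (r * t) - (t + 1)) := by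
      refine le_trans (le_of_eq ?_) h2
      congr 1
      refine integral_congr_ae (Eventually.of_forall fun α => ?_)
      dsimp only
      ring
    have h4 : I ^ (t + 1) * I ^ (2 * (r * t) - (t + 1)) ≤
        (E * p) ^ (2 * (r * t)) * I' ^ (t + 1) * I ^ (2 * (r * t) - (t + 1)) := by
      calc I ^ (t + 1) * I ^ (2 * (r * t) - (t + 1)) = I ^ (2 * (r * t)) := by
            rw [← pow_add, Nat.add_sub_cancel' (by omega)]
        _ ≤ (E * p * T2) ^ (2 * (r * t)) := pow_le_pow_left₀ hI0 h1 _
        _ = (E * p) ^ (2 * (r * t)) * T2 ^ (2 * (r * t)) := mul_pow _ _ _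
        _ ≤ (E * p) ^ (2 * (r * t)) * (I' ^ (t + 1) * I ^ (2 * (r * t) - (t + 1))) := by gcongr
        _ = _ := by ring
    have h5 := le_of_mul_le_mul_right h4 (pow_pos hpos _)
    have hp1 : (1 : ℝ) ≤ p := by exact_mod_cast hp0
    have hEp : 1 ≤ E * p := one_le_mul_of_one_le_of_one_le hE1 hp1
    have ht1 : ((t + 1 : ℕ) : ℝ) ≠ 0 := by positivity
    have h6 : I ≤ (E * p) ^ (2 * ((r * t : ℕ) : ℝ) / (t + 1 : ℕ)) * I' := by
      refine le_of_pow_le_pow_left₀ (n := t + 1) (by omega) (by positivity) (h5.trans (le_of_eq ?_))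
      rw [mul_pow _ I', ← Real.rpow_natCast ((E * p) ^ (2 * ((r * t : ℕ) : ℝ) / (t + 1 : ℕ))),
        ← Real.rpow_mul (by positivity), div_mul_cancel₀ _ ht1, ← Real.rpow_natCast]
      push_cast
      rfl
    refine h6.trans (mul_le_mul_of_nonneg_right ?_ hI'0)
    have hle3 : 2 * ((r * t : ℕ) : ℝ) / (t + 1 : ℕ) ≤ 2 * ((r * t : ℕ) : ℝ) / 3 := by
      have : (3 : ℝ) ≤ (t + 1 : ℕ) := by exact_mod_cast (by omega : 3 ≤ t + 1)
      gcongr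
    calc (E * p) ^ (2 * ((r * t : ℕ) : ℝ) / (t + 1 : ℕ))
        ≤ (E * p) ^ (2 * ((r * t : ℕ) : ℝ) / 3) := Real.rpow_le_rpow_of_exponent_le hEp hle3
      _ = E ^ (2 * ((r * t : ℕ) : ℝ) / 3) * (p : ℝ) ^ (2 * ((r * t : ℕ) : ℝ) / 3) :=
          Real.mul_rpow (by positivity) (by positivity)
      _ ≤ _ := by
          gcongr
          rw [← Real.rpow_natCast]
          refine Real.rpow_le_rpow_of_exponent_le hE1 ?_
          push_cast
          have : (0 : ℝ) ≤ r * t := by positivity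
          linarith

end Conditioning

/-! ### Iterated conditioning and one full step of the iteration -/

section Iteration

variable {k p r : ℕ}

/-- The constant lost in one conditioning step. -/
def condConst (r t : ℕ) : ℝ := (2 * placements r t : ℝ) ^ (2 * (r * t))

lemma condConst_nonneg (r t : ℕ) : 0 ≤ condConst r t := by
  unfold condConst
  positivity

/-- Iterating the conditioning step `H` times. -/
lemma exists_conditioned_or_deep {t a c : ℕ} {ξ z : ℤ} (hp : p.Prime) (hr : 1 ≤ r) (ht : 2 ≤ t)
    (X : ℝ) (hc : 1 ≤ c) (hz1 : 1 ≤ z) (hz2 : z ≤ (p : ℤ) ^ c) (hω : ¬(p : ℤ) ∣ z - ξ) (H : ℕ) :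
    (∃ h < H, ∃ η : ℤ, 1 ≤ η ∧ η ≤ (p : ℤ) ^ (c + h) ∧ ¬(p : ℤ) ∣ η - ξ ∧
      Iab k p r (r * t) X a c ξ z ≤
        (condConst r t * (p : ℝ) ^ (2 * ((r * t : ℕ) : ℝ) / 3)) ^ h *
          (condConst r t * Kab k p r t X a (c + h) ξ η)) ∨
    ∃ η : ℤ, 1 ≤ η ∧ η ≤ (p : ℤ) ^ (c + H) ∧ ¬(p : ℤ) ∣ η - ξ ∧
      Iab k p r (r * t) X a c ξ z ≤
        (condConst r t * (p : ℝ) ^ (2 * ((r * t : ℕ) : ℝ) / 3)) ^ H *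
          Iab k p r (r * t) X a (c + H) ξ η := by
  have hC := condConst_nonneg r t
  induction H with
  | zero => exact Or.inr ⟨z, hz1, hz2, hω, by simp⟩
  | succ H ih =>
    rcases ih with ⟨h, hh, hrest⟩ | ⟨η, h1, h2, h3, h4⟩
    · exact Or.inl ⟨h, hh.trans (Nat.lt_succ_self H), hrest⟩
    · rcases conditioning_step (k := k) (t := t) (a := a) (c := c + H) (ξ := ξ) (η := η) hp hr ht X
        with h5 | ⟨ζ, hζ1, hζ2, hζ3, h5⟩
      · refine Or.inl ⟨H, Nat.lt_succ_self H, η, h1, h2, h3, h4.trans ?_⟩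
        exact mul_le_mul_of_nonneg_left h5 (by positivity)
      · refine Or.inr ⟨ζ, hζ1, hζ2, fun hd => h3 ?_, h4.trans ?_⟩
        · have hpd : (p : ℤ) ∣ (p : ℤ) ^ (c + H) := dvd_pow_self _ (by omega)
          have := dvd_sub hd (hpd.trans hζ3)
          rwa [show ζ - ξ - (ζ - η) = η - ξ by ring] at this
        · rw [pow_succ, mul_assoc]
          exact mul_le_mul_of_nonneg_left h5 (by positivity)

/-- Hölder's inequality bounds `Iab` by Vinogradov mean values. -/
lemma Iab_pow_le {t b c : ℕ} {ξ η : ℤ} (hp : 0 < p) {X Y Z : ℝ} (hξ1 : 1 ≤ ξ)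
    (hξ2 : ξ ≤ (p : ℤ) ^ b) (hη1 : 1 ≤ η) (hη2 : η ≤ (p : ℤ) ^ c) (hY : X / (p : ℝ) ^ b + 1 ≤ Y)
    (hZ : X / (p : ℝ) ^ c + 1 ≤ Z) :
    Iab k p r (r * t) X b c ξ η ^ (t + 1) ≤
      Jcount (r * (t + 1)) k Y * (Jcount (r * (t + 1)) k Z : ℝ) ^ t := by
  have hF := (continuous_Fexp (k := k) (r := r) hp X b ξ).norm
  have hf := (continuous_fexp (k := k) (p := p) X c η).norm
  have h := integral_pow_mul_pow_le (k := k) (u := fun α => ‖Fexp k p r X b ξ α‖ ^ 2)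
    (w := fun α => ‖fexp k p X c η α‖ ^ (2 * r)) (h := fun _ => 1) (i := 1) (n := t + 1)
    (hF.pow 2) (hf.pow _) continuous_const (fun α => by positivity) (fun α => by positivity)
    (fun α => by positivity) (by omega) (by omega)
  simp only [pow_one, Nat.add_sub_cancel, mul_one, ← pow_mul] at h
  have e1 : 2 * r * t = 2 * (r * t) := mul_assoc _ _ _
  have e2 : 2 * r * (t + 1) = 2 * (r * (t + 1)) := mul_assoc _ _ _
  rw [e1, e2] at h
  refine h.trans (mul_le_mul ?_ (pow_le_pow_left₀ (integral_nonneg fun α => by positivity) ?_ _)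
    (by positivity) (by positivity))
  · exact (integral_norm_Fexp_pow_le hp X b ξ (t + 1)).trans
      (integral_norm_fexp_pow_le hp hξ1 hξ2 _ hY)
  · exact integral_norm_fexp_pow_le hp hη1 hη2 _ hZ

lemma Kab_le_Kmax {t a b : ℕ} {ξ η : ℤ} (X : ℝ) (ha : 1 ≤ a) (hξ1 : 1 ≤ ξ)
    (hξ2 : ξ ≤ (p : ℤ) ^ a) (hη1 : 1 ≤ η) (hη2 : η ≤ (p : ℤ) ^ b) (hω : ¬(p : ℤ) ∣ η - ξ) :
    Kab k p r t X a b ξ η ≤ Kmax k p r t X a b := by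
  rw [Kmax, if_neg (by omega)]
  refine le_csSup (Set.Finite.bddAbove ?_) ⟨ξ, η, hξ1, hξ2, hη1, hη2, fun h => hω ?_, rfl⟩
  · refine (((Set.finite_Icc (1 : ℤ) ((p : ℤ) ^ a)).prod
      (Set.finite_Icc (1 : ℤ) ((p : ℤ) ^ b))).image
        fun x => Kab k p r t X a b x.1 x.2).subset ?_
    rintro v ⟨x, y, h1, h2, h3, h4, -, rfl⟩
    exact ⟨(x, y), ⟨⟨h1, h2⟩, ⟨h3, h4⟩⟩, rfl⟩
  · exact Int.modEq_iff_dvd.1 h.symm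

/-- A positive `Kmax` is attained by a mean value of conditioned sums. -/
lemma exists_Kmax_eq {t a b : ℕ} {X : ℝ} (hp : p.Prime) (hK : 0 < Kmax k p r t X a b) :
    ∃ ξ η : ℤ, 1 ≤ η ∧ η ≤ (p : ℤ) ^ b ∧ ¬(p : ℤ) ∣ ξ - η ∧
      Kmax k p r t X a b = ∫ α in _root_.box k,
        ‖tupleSum k (tuples r X fun u => Conditioned p a ξ u ∧ ∀ i, ¬(p : ℤ) ∣ u i - η) α‖ ^ 2 *
          ‖Fexp k p r X b η α‖ ^ (2 * t) := by
  by_cases ha : a = 0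
  · subst ha
    rw [Kmax, if_pos rfl] at hK ⊢
    set S := {v : ℝ | ∃ η : ℤ, 1 ≤ η ∧ η ≤ (p : ℤ) ^ b ∧ v = Ktilde k p r t X b η} with hS
    have hfin : S.Finite := by
      refine ((Set.finite_Icc (1 : ℤ) ((p : ℤ) ^ b)).image fun y => Ktilde k p r t X b y).subset ?_
      rintro v ⟨y, h1, h2, rfl⟩
      exact ⟨y, ⟨h1, h2⟩, rfl⟩
    have hne : S.Nonempty := by
      by_contra h
      rw [Set.not_nonempty_iff_eq_empty.1 h, Real.sSup_empty] at hK
      exact hK.false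
    obtain ⟨η, h1, h2, h3⟩ := hne.csSup_mem hfin
    refine ⟨η + 1, η, h1, h2, fun hd => ?_, ?_⟩
    · rw [add_sub_cancel_left] at hd
      exact hp.one_lt.ne' (by exact_mod_cast Int.eq_one_of_dvd_one (by positivity) hd)
    · rw [h3, Ktilde]
      simp only [Ftilde_eq hp.pos X (η + 1) η]
  · rw [Kmax, if_neg ha] at hK ⊢
    set S := {v : ℝ | ∃ ξ η : ℤ, 1 ≤ ξ ∧ ξ ≤ (p:ℤ)^a ∧ 1 ≤ η ∧ η ≤ (p:ℤ)^b ∧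
      ¬ Int.ModEq (p:ℤ) η ξ ∧ v = Kab k p r t X a b ξ η} with hS
    have hfin : S.Finite := by
      refine (((Set.finite_Icc (1 : ℤ) ((p : ℤ) ^ a)).prod
        (Set.finite_Icc (1 : ℤ) ((p : ℤ) ^ b))).image
          fun x => Kab k p r t X a b x.1 x.2).subset ?_
      rintro v ⟨x, y, h1, h2, h3, h4, -, rfl⟩
      exact ⟨(x, y), ⟨⟨h1, h2⟩, ⟨h3, h4⟩⟩, rfl⟩
    have hne : S.Nonempty := by
      by_contra h
      rw [Set.not_nonempty_iff_eq_empty.1 h, Real.sSup_empty] at hK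
      exact hK.false
    obtain ⟨ξ, η, -, -, h1, h2, hω, h3⟩ := hne.csSup_mem hfin
    have hω' : ¬(p : ℤ) ∣ ξ - η := fun h => hω (Int.modEq_iff_dvd.2 h)
    refine ⟨ξ, η, h1, h2, hω', ?_⟩
    rw [h3, Kab]
    simp only [Fexp_eq_of_not_dvd hp.pos X (Nat.one_le_iff_ne_zero.2 ha) hω']

/-- The exponent of `p` lost in the congruencing step. -/
def congExp (k r t a b : ℕ) : ℕ :=
  ∑ l ∈ Icc (k - r + 1) t, ((t - l) * b + (k - l) * a) + (t * b - a) * r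

/-- One full step: congruencing followed by `H` conditioning steps. -/
theorem efficient_congruencing_step {t a b : ℕ} (hp : p.Prime) (hr : 1 ≤ r) (hrk : r ≤ k)
    (hkp : k < p) (ht : 2 ≤ t) (h2t : k ≤ 2 * t + 1) (hab : a < b) (htab : t * a ≤ b) (H : ℕ)
    {X Y Z : ℝ} (hY : X / (p : ℝ) ^ b + 1 ≤ Y) (hZ : X / (p : ℝ) ^ (t * b + H) + 1 ≤ Z)
    (hK : 0 < Kmax k p r t X a b) :
    ∃ I : ℝ, 0 ≤ I ∧ Kmax k p r t X a b ^ t ≤ ((r : ℝ) ^ (r + 1) * (p : ℝ) ^ congExp k r t a b) ^ t *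
        (I * (Jcount (r * (t + 1)) k Y : ℝ) ^ (t - 1)) ∧
      ((∃ h < H, I ≤ (condConst r t * (p : ℝ) ^ (2 * ((r * t : ℕ) : ℝ) / 3)) ^ h *
          (condConst r t * Kmax k p r t X b (t * b + h))) ∨
        ∃ I' : ℝ, 0 ≤ I' ∧ I ≤ (condConst r t * (p : ℝ) ^ (2 * ((r * t : ℕ) : ℝ) / 3)) ^ H * I' ∧
          I' ^ (t + 1) ≤ Jcount (r * (t + 1)) k Y * (Jcount (r * (t + 1)) k Z : ℝ) ^ t) := by
  have hb : 1 ≤ b := by omega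
  have hC := condConst_nonneg r t
  obtain ⟨ξ, η, hη1, hη2, hω, hKeq⟩ := exists_Kmax_eq hp hK
  obtain ⟨z, hz1, hz2, hzω, hcong⟩ :=
    congruencing_step hp hr hrk hkp ht h2t hab htab hω X hKeq hK
  refine ⟨Iab k p r (r * t) X b (t * b) η z, Iab_nonneg _ _ _ _ _ _ _ _ _, ?_, ?_⟩
  · refine hcong.trans (mul_le_mul (le_of_eq ?_) ?_ ?_ (by positivity))
    · congr 1
      rw [congExp]
      push_cast
      rw [pow_add (p : ℝ), pow_mul, pow_succ]
      ring
    · refine mul_le_mul_of_nonneg_left (pow_le_pow_left₀ (integral_nonneg fun α => by positivity) ?_ _)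
        (Iab_nonneg _ _ _ _ _ _ _ _ _)
      exact (integral_norm_Fexp_pow_le hp.pos X b η (t + 1)).trans
        (integral_norm_fexp_pow_le hp.pos hη1 hη2 _ hY)
    · exact mul_nonneg (Iab_nonneg _ _ _ _ _ _ _ _ _)
        (pow_nonneg (integral_nonneg fun α => by positivity) _)
  · have htb : 1 ≤ t * b := Nat.mul_pos (by omega) hb
    rcases exists_conditioned_or_deep (k := k) (a := b) hp hr ht X htb hz1 hz2 hzω H with
      ⟨h, hh, ζ, h1, h2, h3, h4⟩ | ⟨ζ, h1, h2, -, h4⟩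
    · refine Or.inl ⟨h, hh, h4.trans ?_⟩
      gcongr
      exact Kab_le_Kmax X hb hη1 hη2 h1 h2 h3
    · exact Or.inr ⟨_, Iab_nonneg _ _ _ _ _ _ _ _ _, h4,
        Iab_pow_le hp.pos hη1 hη2 h1 h2 hY hZ⟩

end Iteration

/-! ### Exponents and logarithms -/

section Exponents

/-- The exponent of `p` lost in the congruencing step, in closed form. -/
lemma congExp_eq {k r t a b : ℕ} (ht : t ≤ k) (hr : r ≤ k) (hrt : k ≤ r + t) (ha : a ≤ t * b) :
    (congExp k r t a b : ℝ) = muC k r t * b + nuC k r t * a + (t * b - a) * r := by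
  obtain ⟨n, hn⟩ : ∃ n, r + t = k + n := Nat.exists_eq_add_of_le hrt
  obtain ⟨d, rfl⟩ : ∃ d, k = t + d := Nat.exists_eq_add_of_le ht
  have hsum : ∑ l ∈ Icc (t + d - r + 1) t, ((t - l) * b + (t + d - l) * a) =
      ∑ j ∈ range n, (j * b + (d + j) * a) := by
    refine Finset.sum_bij' (fun l _ => t - l) (fun j _ => t - j) ?_ ?_ ?_ ?_ ?_
    · intro l hl
      rw [Finset.mem_Icc] at hl
      rw [Finset.mem_range]
      omega
    · intro j hj
      rw [Finset.mem_range] at hj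
      rw [Finset.mem_Icc]
      omega
    · intro l hl
      rw [Finset.mem_Icc] at hl
      omega
    · intro j hj
      rw [Finset.mem_range] at hj
      omega
    · intro l hl
      rw [Finset.mem_Icc] at hl
      rw [show t + d - l = d + (t - l) by omega]
  have hgauss : ∀ n : ℕ, ((∑ j ∈ range n, (j * b + (d + j) * a) : ℕ) : ℝ) =
      (n : ℝ) * (n - 1) / 2 * b + (n * d + n * (n - 1) / 2) * a := by
    intro n
    induction n with
    | zero => simp
    | succ n ih =>
      rw [Finset.sum_range_succ, Nat.cast_add, ih]
      push_cast
      ring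
  have hnr : (r : ℝ) = d + n := by
    have : r = d + n := by omega
    rw [this]
    push_cast
    ring
  rw [congExp, hsum, Nat.cast_add, hgauss, Nat.cast_mul, Nat.cast_sub ha, muC, nuC, hnr]
  push_cast
  ring

lemma congExp_le {k r t a b : ℕ} (hab : a ≤ b) :
    congExp k r t a b ≤ (t * (t + k) + t * r) * b := by
  have h1 : ∑ l ∈ Icc (k - r + 1) t, ((t - l) * b + (k - l) * a) ≤ t * ((t + k) * b) := by
    have hcard : (Icc (k - r + 1) t).card ≤ t := by
      rw [Nat.card_Icc]
      omega
    calc _ ≤ ∑ _l ∈ Icc (k - r + 1) t, (t + k) * b := Finset.sum_le_sum fun l _ => by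
          rw [add_mul]
          exact add_le_add (Nat.mul_le_mul_right b (Nat.sub_le t l))
            (Nat.mul_le_mul (Nat.sub_le k l) hab)
      _ = (Icc (k - r + 1) t).card * ((t + k) * b) := by rw [Finset.sum_const, smul_eq_mul]
      _ ≤ _ := Nat.mul_le_mul_right _ hcard
  have h2 : (t * b - a) * r ≤ t * b * r := Nat.mul_le_mul_right r (Nat.sub_le _ _)
  unfold congExp
  linarith

/-- Combining the hypothesis with the congruencing step, on a logarithmic scale. -/
lemma log_bound_of_congruencing {x m ψ c γ Λ κ lam δ μ ν β t r a b c₁ D ℓ lK lI lJ : ℝ}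
    (hκ : κ = r * (t + 1) - μ - β) (hν : μ + ν = β * (t - 1)) (hlam : Λ = lam - 2 * (r * (t + 1)) + κ)
    (ht : 1 ≤ t) (hb : 0 ≤ b) (hm : 0 ≤ m) (hx : 0 ≤ x) (hδ : 0 ≤ δ) (hβ : 0 ≤ β) (hab : t * a ≤ b)
    (hhyp : Λ * x + Λ * ψ * m ≤
      c₁ + c * δ * x - γ * m + lK - 2 * (r * t) * (x - b * m) + (κ - 2 * r) * (x - a * m))
    (hcong : t * lK ≤
      t * (D + (μ * b + ν * a + (t * b - a) * r) * (m + ℓ)) + lI + (t - 1) * lJ)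
    (hJ : lJ ≤ (lam + δ) * (x - b * m + ℓ)) :
    Λ * x + Λ * (t * ψ + (t - 1) * b) * m ≤
      (t * c₁ + t * D + t * (μ * b + ν * a + (t * b - a) * r) * ℓ + (t - 1) * (lam + δ) * ℓ) +
        t * (c + 1) * δ * x - (t * γ - r * t * (b - t * a)) * m + lI -
        2 * (r * t) * (x - t * b * m) + (κ - 2 * r) * (x - b * m) := by
  obtain rfl : lam = Λ + 2 * (r * (t + 1)) - κ := by linarith
  obtain rfl : ν = β * (t - 1) - μ := by linarith
  subst hκ
  have h1 := mul_le_mul_of_nonneg_left hhyp (by linarith : 0 ≤ t)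
  have h2 := mul_le_mul_of_nonneg_left hJ (by linarith : 0 ≤ t - 1)
  have h3 : 0 ≤ t * β * (b - t * a) * m := by
    have : 0 ≤ b - t * a := by linarith
    positivity
  have h4 : 0 ≤ δ * (x + (t - 1) * (b * m)) := by
    have : 0 ≤ t - 1 := by linarith
    positivity
  linarith

/-- The deep case of the conditioning process forces `M` to be bounded. -/
lemma log_le_of_deep {x m ψ c γ Λ κ lam δ θ t r a b A C ℓ H lI lI' lJ lJ' : ℝ}
    (hlam : Λ = lam - 2 * (r * (t + 1)) + κ) (hκ : κ ≤ r * (t + 1)) (hH : H = 15 * (t - 1) * b + 1)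
    (hr : 1 ≤ r) (ht : 2 ≤ t) (hb : 1 ≤ b) (ha : 0 ≤ a) (hm : 0 ≤ m) (hx : 0 ≤ x)
    (hmx : m = θ * x) (hδ : 0 ≤ δ) (hδθ : δ ≤ θ / 2) (hcδ : c * δ ≤ θ / 2) (hΛ : 0 ≤ Λ) (hψ : 0 ≤ ψ)
    (hγ : -(r * b) ≤ γ)
    (hI : Λ * x + Λ * (t * ψ + (t - 1) * b) * m ≤
      A + t * (c + 1) * δ * x - (t * γ - r * t * (b - t * a)) * m + lI -
        2 * (r * t) * (x - t * b * m) + (κ - 2 * r) * (x - b * m))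
    (hI' : lI ≤ H * (C + 2 * (r * t) / 3 * (m + ℓ)) + lI')
    (hJJ : (t + 1) * lI' ≤ lJ + t * lJ')
    (hJ : lJ ≤ (lam + δ) * (x - b * m + ℓ))
    (hJ' : lJ' ≤ (lam + δ) * (x - (t * b + H) * m + ℓ)) :
    m ≤ A + H * (C + 2 * (r * t) / 3 * ℓ) + (lam + δ) * ℓ := by
  obtain ⟨ρ, rfl⟩ : ∃ ρ, κ = (t + 1) * (2 * r - ρ) :=
    ⟨2 * r - κ / (t + 1), by field_simp; ring⟩
  obtain rfl : lam = Λ + (t + 1) * ρ := by linarith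
  have hρ : r ≤ ρ := by
    have : 0 < t + 1 := by linarith
    nlinarith
  have htb : 0 ≤ (t - 1) * b := by
    have : 0 ≤ t - 1 := by linarith
    positivity
  have hH1 : 1 ≤ H := by linarith
  have hq : 0 ≤ (b + t * (t * b + H)) * m := by positivity
  have hU : lI' ≤ (Λ + (t + 1) * ρ + δ) * (x + ℓ) - ρ * ((b + t * (t * b + H)) * m) := by
    have h1 := mul_le_mul_of_nonneg_left hJ' (by linarith : 0 ≤ t)
    have h2 : 0 ≤ (Λ + δ) * ((b + t * (t * b + H)) * m) := by positivity
    refine le_of_mul_le_mul_left (?_ : (t + 1) * _ ≤ (t + 1) * _) (by linarith)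
    linarith
  have h1 : 0 ≤ (ρ - r) * (t * (((t - 1) * b + H) * m)) := by
    have : 0 ≤ ρ - r := by linarith
    positivity
  have h2 : 0 ≤ Λ * (t * ψ + (t - 1) * b) * m := by positivity
  have h3 : 0 ≤ t * (γ + r * b) * m := by
    have : 0 ≤ γ + r * b := by linarith
    positivity
  have h4 : t * (c * δ) * x ≤ t * (m / 2) := by
    rw [hmx, mul_assoc, mul_div_right_comm]
    gcongr
  have h5 : (t + 1) * (δ * x) ≤ (t + 1) * (m / 2) := by
    rw [hmx, mul_div_right_comm]
    gcongr
  have h6 : 0 ≤ r * t * (t * a) * m := by positivity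
  have h7 : 0 ≤ (r - 1) * t * m := by
    have : 0 ≤ r - 1 := by linarith
    positivity
  have h8 : 0 ≤ r * t * (b - 1) * m := by
    have : 0 ≤ b - 1 := by linarith
    positivity
  have h9 : 0 ≤ r * t * (t - 2) * b * m := by
    have : 0 ≤ t - 2 := by linarith
    positivity
  have h10 : 0 ≤ (t - 2) * m := by
    have : 0 ≤ t - 2 := by linarith
    positivity
  have h11 : 0 ≤ r * t * m := by positivity
  subst hH
  linarith

end Exponents

section Assembly

lemma thetaC_pos {t N : ℕ} (ht : 1 ≤ t) : 0 < thetaC t N := by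
  have : (0 : ℝ) < t := by exact_mod_cast ht
  unfold thetaC
  positivity

lemma deltaC_pos {t N : ℕ} (ht : 1 ≤ t) (hN : 1 ≤ N) : 0 < deltaC t N := by
  have h1 : (0 : ℝ) < t := by exact_mod_cast ht
  have h2 : (0 : ℝ) < N := by exact_mod_cast hN
  have := thetaC_pos (N := N) ht
  unfold deltaC
  positivity

lemma deltaC_le {t N : ℕ} (ht : 1 ≤ t) (hN : 1 ≤ N) : deltaC t N ≤ thetaC t N / 2 := by
  have h1 : (1 : ℝ) ≤ t := by exact_mod_cast ht
  have h2 : (1 : ℝ) ≤ N := by exact_mod_cast hN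
  have h3 : (1 : ℝ) ≤ (t : ℝ) ^ N := one_le_pow₀ h1
  have hθ := thetaC_pos (N := N) ht
  unfold deltaC
  refine div_le_div_of_nonneg_left hθ.le (by norm_num) ?_
  nlinarith [mul_le_mul h2 h3 zero_le_one (by linarith)]

lemma muC_nonneg {k r t : ℕ} (hrt : k ≤ r + t) : 0 ≤ muC k r t := by
  obtain ⟨n, hn⟩ := Nat.exists_eq_add_of_le hrt
  have hn' : (t : ℝ) + r - k = n := by
    have : (r : ℝ) + t = k + n := by exact_mod_cast hn
    linarith
  rw [muC, hn']
  rcases Nat.eq_zero_or_pos n with rfl | h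
  · simp
  · have : (1 : ℝ) ≤ n := by exact_mod_cast h
    have : (0 : ℝ) ≤ n - 1 := by linarith
    positivity

/-- The contribution to `κ` beyond `μ`. -/
def betaC (k r t : ℕ) : ℝ := ((t : ℝ) + r - k) * (r - 1) / (t - 1)

lemma betaC_nonneg {k r t : ℕ} (hr : 1 ≤ r) (ht : 2 ≤ t) (hrt : k ≤ r + t) : 0 ≤ betaC k r t := by
  have h1 : (1 : ℝ) ≤ r := by exact_mod_cast hr
  have h2 : (2 : ℝ) ≤ t := by exact_mod_cast ht
  have h3 : (k : ℝ) ≤ r + t := by exact_mod_cast hrt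
  exact div_nonneg (mul_nonneg (by linarith) (by linarith)) (by linarith)

lemma kappa_eq (k r t : ℕ) : kappa k r t = r * (t + 1) - muC k r t - betaC k r t := by
  unfold kappa muC betaC
  ring

lemma muC_add_nuC {k r t : ℕ} (ht : 2 ≤ t) : muC k r t + nuC k r t = betaC k r t * (t - 1) := by
  have h2 : (2 : ℝ) ≤ t := by exact_mod_cast ht
  have h3 : (t : ℝ) - 1 ≠ 0 := by linarith
  rw [betaC, div_mul_cancel₀ _ h3, muC, nuC]
  ring

lemma one_le_condConst {r t : ℕ} (ht : 1 ≤ t) : 1 ≤ condConst r t := by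
  have h : 1 ≤ placements r t := by
    have : 0 < Fintype.card (Fin r ↪ Fin (r * t)) :=
      Fintype.card_pos_iff.2 ⟨Fin.castLEEmb (Nat.le_mul_of_pos_right r ht)⟩
    unfold placements
    omega
  have h' : (1 : ℝ) ≤ placements r t := by exact_mod_cast h
  exact one_le_pow₀ (by linarith)

/-- The bounds needed to apply the mean value estimate at scale `X / M ^ e`. -/
lemma log_Jcount_le {k n e p : ℕ} {X M x m : ℝ} {lam : ℝ} (hX : 1 ≤ X) (hM : 0 < M) (hMp : M ≤ p)
    (hx : Real.log X = x) (hm : Real.log M = m) (he : e * m ≤ x / 2)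
    (hJ : ∀ Y : ℝ, X ^ ((1 : ℝ) / 2) ≤ Y → (Jcount n k Y : ℝ) < Y ^ lam) :
    X / (p : ℝ) ^ e + 1 ≤ 2 * (X / M ^ e) ∧
      (0 < (Jcount n k (2 * (X / M ^ e)) : ℝ) →
        Real.log (Jcount n k (2 * (X / M ^ e))) ≤ lam * (x - e * m + Real.log 2)) := by
  have hX0 : 0 < X := by linarith
  have hY0 : 0 < X / M ^ e := by positivity
  have hlog : Real.log (X / M ^ e) = x - e * m := by
    rw [Real.log_div hX0.ne' (by positivity), Real.log_pow, hx, hm]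
  have hhalf : X ^ ((1 : ℝ) / 2) ≤ X / M ^ e := by
    rw [← Real.log_le_log_iff (by positivity) hY0, hlog, Real.log_rpow hX0, hx]
    linarith
  have h1 : 1 ≤ X / M ^ e := (Real.one_le_rpow hX (by norm_num)).trans hhalf
  have h2 : X / (p : ℝ) ^ e ≤ X / M ^ e := by gcongr
  refine ⟨by linarith, fun hpos => ?_⟩
  refine (Real.log_le_log hpos (hJ _ (by linarith)).le).trans (le_of_eq ?_)
  rw [Real.log_rpow (by positivity), Real.log_mul (by norm_num) hY0.ne', hlog]
  ring

lemma log_mul_normK {k p r t N a b : ℕ} {C X u v x m : ℝ} (hC : 0 < C) (hX : 0 < X)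
    (hx : Real.log X = x) (hm : Real.log (Mval t N X) = m) (hK : 0 < Kmax k p r t X a b) :
    0 < C * X ^ u * Mval t N X ^ v * normK k p r t N X a b ∧
      Real.log (C * X ^ u * Mval t N X ^ v * normK k p r t N X a b) =
        Real.log C + u * x + v * m + Real.log (Kmax k p r t X a b) -
          2 * ((r : ℝ) * t) * (x - b * m) + (kappa k r t - 2 * r) * (x - a * m) := by
  have hM : 0 < Mval t N X := Real.rpow_pos_of_pos hX _
  have hl : ∀ e : ℕ, Real.log (X / Mval t N X ^ e) = x - e * m := fun e => by
    rw [Real.log_div hX.ne' (by positivity), Real.log_pow, hx, hm]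
  unfold normK
  have h1 : 0 < X / Mval t N X ^ a := by positivity
  have h2 : 0 < X / Mval t N X ^ b := by positivity
  refine ⟨by positivity, ?_⟩
  rw [Real.log_mul (by positivity) (by positivity), Real.log_mul (by positivity) (by positivity),
    Real.log_mul hC.ne' (by positivity), Real.log_mul (by positivity) (by positivity),
    Real.log_mul hK.ne' (by positivity), Real.log_rpow hX, Real.log_rpow hM, Real.log_rpow h1,
    Real.log_rpow h2, hl, hl, hx, hm]
  push_cast
  ring

end Assembly

set_option maxHeartbeats 1000000 in
/-- Lemma 7.1: suppose Λ ≥ 0, 0 ≤ a < b ≤ (32tθ)⁻¹ with b ≥ ta, g = b - ta, and that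
ψ, c, γ satisfy 0 ≤ c ≤ (2δ)⁻¹θ, γ ≥ -rb, ψ ≥ 0 together with
X^Λ M^{Λψ} ≤ C₁ X^{cδ} M^{-γ} ⟦K_{a,b}(X)⟧.  Then for some 0 ≤ h ≤ 15(t-1)b one has
X^Λ M^{Λψ'} ≤ C₂ X^{c'δ} M^{-γ'} ⟦K_{b,tb+h}(X)⟧, where ψ' = tψ + (t-1)b,
c' = t(c+1) and γ' = tγ + (4/3)sh - sg. -/
theorem lemma7_1 (k r t : ℕ) (hk : 2 ≤ k)
    (ht1 : max 2 (((k : ℝ) - 1) / 2) ≤ (t : ℝ)) (ht2 : t ≤ k)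
    (hr1 : 1 ≤ r) (hr2 : r ≤ k) (hrt : k ≤ r + t) (C₁ : ℝ) (hC₁ : 0 < C₁) :
    ∃ P₀ : ℝ, ∃ N₀ : ℕ, ∀ N : ℕ, N₀ ≤ N →
    ∃ C₂ : ℝ, 0 < C₂ ∧ ∃ X₀ : ℝ, ∀ X : ℝ, X₀ ≤ X →
    (∀ Y : ℝ, X ^ ((1:ℝ)/2) ≤ Y →
        (Jcount (r*(t+1)) k Y : ℝ) < Y ^ (lamExp k (r*(t+1)) + deltaC t N)) →
    ∀ p : ℕ, p.Prime → P₀ < (p:ℝ) → Mval t N X < (p:ℝ) → (p:ℝ) ≤ 2 * Mval t N X →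
    0 ≤ LamC k r t →
    ∀ a b : ℕ, a < b → (b:ℝ) ≤ (32*(t:ℝ)*thetaC t N)⁻¹ → t*a ≤ b →
    ∀ ψ c γ : ℝ, 0 ≤ c → c ≤ (2 * deltaC t N)⁻¹ * thetaC t N →
      -((r:ℝ)*b) ≤ γ → 0 ≤ ψ →
    X ^ LamC k r t * Mval t N X ^ (LamC k r t * ψ) ≤
        C₁ * X ^ (c * deltaC t N) * Mval t N X ^ (-γ) * normK k p r t N X a b →
    ∃ h : ℕ, h ≤ 15*(t-1)*b ∧
      X ^ LamC k r t * Mval t N X ^ (LamC k r t * ((t:ℝ)*ψ + ((t:ℝ)-1)*b)) ≤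
        C₂ * X ^ ((t:ℝ)*(c+1) * deltaC t N) *
          Mval t N X ^ (-((t:ℝ)*γ + (4/3)*((r*t : ℕ):ℝ)*(h:ℝ)
            - ((r*t : ℕ):ℝ)*((b - t*a : ℕ):ℝ))) *
          normK k p r t N X b (t*b+h) := by
  have ht : 2 ≤ t := by exact_mod_cast (le_max_left _ _).trans ht1
  have h2t : k ≤ 2 * t + 1 := by
    have h : ((k : ℝ) - 1) / 2 ≤ t := (le_max_right _ _).trans ht1
    have h' : (k : ℝ) ≤ 2 * t + 1 := by linarith
    exact_mod_cast h'
  have ht' : (2 : ℝ) ≤ t := by exact_mod_cast ht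
  have hr' : (1 : ℝ) ≤ r := by exact_mod_cast hr1
  set β := betaC k r t
  set μ := muC k r t
  set ν := nuC k r t
  set κ := kappa k r t
  set Λ := LamC k r t
  set lam := lamExp k (r * (t + 1))
  have hκ : κ = r * (t + 1) - μ - β := kappa_eq k r t
  have hν : μ + ν = β * (t - 1) := muC_add_nuC ht
  have hβ : 0 ≤ β := betaC_nonneg hr1 ht hrt
  have hμ : 0 ≤ μ := muC_nonneg hrt
  have hlam : Λ = lam - 2 * (r * (t + 1)) + κ := by
    change lam - 2 * ((r * (t + 1) : ℕ) : ℝ) + κ = _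
    push_cast
    ring
  refine ⟨k, 1, fun N hN => ?_⟩
  set θ := thetaC t N with hθdef
  set δ := deltaC t N
  have hθ : 0 < θ := thetaC_pos (by omega)
  have hδ : 0 < δ := deltaC_pos (by omega) hN
  have hδθ : δ ≤ θ / 2 := deltaC_le (by omega) hN
  set D := Real.log ((r : ℝ) ^ (r + 1)) with hD
  have hD0 : 0 ≤ D := Real.log_nonneg (one_le_pow₀ hr')
  set ℓ := Real.log 2 with hℓ
  have hℓ0 : 0 ≤ ℓ := Real.log_nonneg (by norm_num)
  set lc := Real.log (condConst r t) with hlc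
  have hcc1 : 1 ≤ condConst r t := one_le_condConst (by omega)
  have hcc0 : 0 < condConst r t := by linarith
  have hlc0 : 0 ≤ lc := Real.log_nonneg hcc1
  set B : ℝ := (32 * (t : ℝ) * θ)⁻¹ with hB
  have hB0 : 0 < B := by positivity
  set Q : ℝ := t * (t + k) + t * r with hQ
  set W : ℝ := t * Real.log C₁ + t * D + t * (Q * B) * ℓ + t * (lam + δ) * ℓ +
    (15 * (t - 1) * B + 1) * (lc + 2 * (r * t) / 3 * ℓ) with hW
  refine ⟨Real.exp W, Real.exp_pos W, Real.exp ((|W| + 1) / θ), ?_⟩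
  intro X hX hJ p hp hPp hMp hpM hΛ a b hab hbB htab ψ c γ hc0 hc hγ hψ hyp
  have hX0 : 0 < X := (Real.exp_pos _).trans_le hX
  set x := Real.log X with hx
  have hxW : (|W| + 1) / θ ≤ x := (Real.le_log_iff_exp_le hX0).2 hX
  have hx0 : 0 ≤ x := le_trans (by positivity) hxW
  have hX1 : 1 ≤ X := by
    rw [← Real.exp_log hX0]
    exact Real.one_le_exp hx0
  have hM : 0 < Mval t N X := Real.rpow_pos_of_pos hX0 _
  set m := Real.log (Mval t N X) with hm
  have hmx : m = θ * x := Real.log_rpow hX0 _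
  have hmW : W < m := by
    have := (div_le_iff₀ hθ).1 hxW
    rw [hmx]
    linarith [le_abs_self W]
  have hm0 : 0 ≤ m := by
    rw [hmx]
    positivity
  have hkp : k < p := by exact_mod_cast hPp
  have hp0 : (0 : ℝ) < p := by exact_mod_cast hp.pos
  have hlp : Real.log p ≤ m + ℓ := by
    refine (Real.log_le_log hp0 hpM).trans (le_of_eq ?_)
    rw [Real.log_mul (by norm_num) hM.ne', add_comm]
  have hb1 : 1 ≤ b := by omega
  have hb' : (1 : ℝ) ≤ b := by exact_mod_cast hb1
  have htab' : (t : ℝ) * a ≤ b := by exact_mod_cast htab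
  have hlamδ : 0 ≤ lam + δ := by
    have h1 : 0 ≤ (r : ℝ) * (t + 1) := by positivity
    linarith
  have hbθ : 16 * t * b * m ≤ x / 2 := by
    have h1 : (b : ℝ) * (32 * t * θ) ≤ 1 := by
      have := mul_le_mul_of_nonneg_right hbB (by positivity : 0 ≤ 32 * (t : ℝ) * θ)
      rwa [hB, inv_mul_cancel₀ (by positivity)] at this
    have h2 := mul_le_mul_of_nonneg_right h1 hx0
    rw [hmx]
    linarith
  have hcδ : c * δ ≤ θ / 2 := by
    have := mul_le_mul_of_nonneg_right hc hδ.le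
    refine this.trans (le_of_eq ?_)
    field_simp
  set H := 15 * (t - 1) * b + 1 with hH
  have hH' : (H : ℝ) = 15 * (t - 1) * b + 1 := by
    rw [hH]
    push_cast [Nat.cast_sub (by omega : 1 ≤ t)]
    ring
  have hHB : (H : ℝ) ≤ 15 * (t - 1) * B + 1 := by
    rw [hH']
    have : (0 : ℝ) ≤ t - 1 := by linarith
    gcongr
  obtain ⟨hY, hlJ⟩ := log_Jcount_le (e := b) hX1 hM hMp.le hx.symm hm.symm (by
    have := mul_le_mul_of_nonneg_right (by linarith : 1 ≤ 16 * (t : ℝ))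
      (by positivity : 0 ≤ (b : ℝ) * m)
    linarith) hJ
  obtain ⟨hZ, hlJ'⟩ := log_Jcount_le (e := t * b + H) hX1 hM hMp.le hx.symm hm.symm (by
    have : ((t * b + H : ℕ) : ℝ) ≤ 16 * t * b := by
      push_cast
      rw [hH']
      linarith
    have := mul_le_mul_of_nonneg_right this hm0
    linarith) hJ
  have hK : 0 < Kmax k p r t X a b := by
    have h0 : 0 < X ^ Λ * Mval t N X ^ (Λ * ψ) := by positivity
    have h1 : 0 < normK k p r t N X a b := pos_of_mul_pos_right (h0.trans_le hyp) (by positivity)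
    unfold normK at h1
    exact pos_of_mul_pos_left (pos_of_mul_pos_left h1 (by positivity)) (by positivity)
  have hloghyp := Real.log_le_log (by positivity) hyp
  rw [(log_mul_normK hC₁ hX0 hx.symm hm.symm hK).2, Real.log_mul (by positivity) (by positivity),
    Real.log_rpow hX0, Real.log_rpow hM, ← hx, ← hm] at hloghyp
  obtain ⟨I, hI0, hcong, hcases⟩ := efficient_congruencing_step hp hr1 hr2 hkp ht h2t hab htab H
    hY hZ hK
  set J := (Jcount (r * (t + 1)) k (2 * (X / Mval t N X ^ b)) : ℝ)
  set J' := (Jcount (r * (t + 1)) k (2 * (X / Mval t N X ^ (t * b + H))) : ℝ)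
  have hIJ : 0 < I * J ^ (t - 1) :=
    pos_of_mul_pos_right ((pow_pos hK t).trans_le hcong) (by positivity)
  have hI : 0 < I := pos_of_mul_pos_left hIJ (by positivity)
  have hJpos : 0 < J := by
    have h1 : 0 < J ^ (t - 1) := pos_of_mul_pos_right hIJ hI0
    have h2 : J ≠ 0 := fun h => by
      rw [h, zero_pow (by omega)] at h1
      exact h1.false
    exact lt_of_le_of_ne (Nat.cast_nonneg _) h2.symm
  replace hlJ := hlJ hJpos
  have hE := congExp_eq (a := a) (b := b) ht2 hr2 hrt (by nlinarith)
  have hEQ : (congExp k r t a b : ℝ) ≤ Q * B := by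
    have h1 : (congExp k r t a b : ℝ) ≤ Q * b := by
      rw [hQ]
      exact_mod_cast congExp_le (k := k) (r := r) (t := t) hab.le
    exact h1.trans (mul_le_mul_of_nonneg_left hbB (by positivity))
  have hlogcong : t * Real.log (Kmax k p r t X a b) ≤
      t * (D + (μ * b + ν * a + (t * b - a) * r) * (m + ℓ)) + Real.log I +
        (t - 1) * Real.log J := by
    have h := Real.log_le_log (pow_pos hK t) hcong
    rw [Real.log_pow, Real.log_mul (by positivity) hIJ.ne', Real.log_pow,
      Real.log_mul (by positivity) (by positivity), Real.log_mul hI.ne' (by positivity),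
      Real.log_pow J, Real.log_pow (p : ℝ), Nat.cast_sub (by omega), Nat.cast_one, hE] at h
    have h2 := mul_le_mul_of_nonneg_left hlp (Nat.cast_nonneg (α := ℝ) (congExp k r t a b))
    rw [hE] at h2
    have h3 := mul_le_mul_of_nonneg_left h2 (by linarith : (0 : ℝ) ≤ t)
    linarith
  have hmain := log_bound_of_congruencing (c := c) (γ := γ) (ψ := ψ) (c₁ := Real.log C₁) hκ hν hlam
    (by linarith) (by linarith) hm0 hx0 hδ.le hβ htab' (by linarith) hlogcong hlJ
  rw [← hE] at hmain
  have hEℓ : t * (congExp k r t a b : ℝ) * ℓ ≤ t * (Q * B) * ℓ := by gcongr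
  set A : ℝ := t * Real.log C₁ + t * D + t * (congExp k r t a b : ℝ) * ℓ +
    (t - 1) * (lam + δ) * ℓ with hA
  have hstep : Real.log (condConst r t * (p : ℝ) ^ (2 * ((r * t : ℕ) : ℝ) / 3)) ≤
      lc + 2 * (r * t) / 3 * (m + ℓ) := by
    rw [Real.log_mul hcc0.ne' (by positivity), Real.log_rpow hp0]
    push_cast
    gcongr
  rcases hcases with ⟨h, hh, hIK⟩ | ⟨I', hI'0, hII', hIJJ⟩
  · refine ⟨h, by omega, ?_⟩
    have hK' : 0 < Kmax k p r t X b (t * b + h) :=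
      pos_of_mul_pos_right (pos_of_mul_pos_right (hI.trans_le hIK) (by positivity)) hcc0.le
    obtain ⟨hpos, hlog⟩ := log_mul_normK (N := N) (u := (t : ℝ) * (c + 1) * δ)
      (v := -((t : ℝ) * γ + (4 / 3) * ((r * t : ℕ) : ℝ) * (h : ℝ)
            - ((r * t : ℕ) : ℝ) * ((b - t * a : ℕ) : ℝ)))
      (Real.exp_pos W) hX0 hx.symm hm.symm hK'
    rw [← Real.log_le_log_iff (by positivity) hpos, hlog, Real.log_exp,
      Real.log_mul (by positivity) (by positivity), Real.log_rpow hX0, Real.log_rpow hM, ← hx, ← hm]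
    have hlogI := Real.log_le_log hI hIK
    rw [Real.log_mul (by positivity) (by positivity), Real.log_pow,
      Real.log_mul hcc0.ne' hK'.ne', ← hlc] at hlogI
    have h1 := mul_le_mul_of_nonneg_left hstep (Nat.cast_nonneg (α := ℝ) h)
    have h2 : (h : ℝ) * (lc + 2 * (r * t) / 3 * ℓ) + lc ≤
        (15 * (t - 1) * B + 1) * (lc + 2 * (r * t) / 3 * ℓ) := by
      have h3 : (h : ℝ) + 1 ≤ 15 * (t - 1) * B + 1 := by
        refine le_trans ?_ hHB
        exact_mod_cast hh
      have h4 := mul_le_mul_of_nonneg_right h3 (by positivity : 0 ≤ lc + 2 * (r * t) / 3 * ℓ)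
      have h5 : 0 ≤ 2 * ((r : ℝ) * t) / 3 * ℓ := by positivity
      linarith
    have h6 : 0 ≤ (lam + δ) * ℓ := by positivity
    push_cast [Nat.cast_sub htab]
    linarith
  · exfalso
    have hI' : 0 < I' := pos_of_mul_pos_right (hI.trans_le hII') (by positivity)
    have hJ'pos : 0 < J' := by
      have h1 : 0 < J' ^ t := pos_of_mul_pos_right ((pow_pos hI' _).trans_le hIJJ) hJpos.le
      have h2 : J' ≠ 0 := fun h => by
        rw [h, zero_pow (by omega)] at h1
        exact h1.false
      exact lt_of_le_of_ne (Nat.cast_nonneg _) h2.symm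
    replace hlJ' := hlJ' hJ'pos
    push_cast at hlJ'
    have hlogI := Real.log_le_log hI hII'
    rw [Real.log_mul (by positivity) hI'.ne', Real.log_pow] at hlogI
    have h1 := mul_le_mul_of_nonneg_left hstep (Nat.cast_nonneg (α := ℝ) H)
    have hlogJJ := Real.log_le_log (pow_pos hI' _) hIJJ
    rw [Real.log_pow, Real.log_mul hJpos.ne' (by positivity), Real.log_pow] at hlogJJ
    push_cast at hlogJJ
    have hκr : κ ≤ r * (t + 1) := by linarith
    have hfin := log_le_of_deep (A := A) hlam hκr hH' hr' ht' hb' (Nat.cast_nonneg a) hm0 hx0 hmx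
      hδ.le hδθ hcδ hΛ hψ hγ hmain (hlogI.trans (add_le_add_left h1 _)) hlogJJ hlJ hlJ'
    have h2 := mul_le_mul_of_nonneg_right hHB (by positivity : 0 ≤ lc + 2 * (r * t) / 3 * ℓ)
    linarith

end
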